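/- arXiv:math/0308045 — 2 statements merged into one kernel-verified Lean document; each statement's English description precedes it below -/
import Mathlib

section
/- Let P be an induced-hereditary graph property. Then P has a unique factorisation if and only if one of the following holds: (1) P is irreducible; (2) P = O(r)∘O(s) for some 1 ≤ r,s ≤ ∞; (3) P = K(r)∘K(s) for some 1 ≤ r,s ≤ ∞; (4) P = O(r)∘K(s) for some finite r,s ≥ 1. -/
attribute [local instance] Classical.propDecidable

open SimpleGraph

/-- A finite simple graph, bundled. -/
structure FGraph : Type 1 where
  V : Type
  [fin : Fintype V]
  graph : SimpleGraph V

attribute [instance] FGraph.fin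

namespace FGraph

/-- `G.IsInduced H` : `G` is isomorphic to an induced subgraph of `H`. -/
def IsInduced (G H : FGraph) : Prop := Nonempty (G.graph ↪g H.graph)

/-- `G.IsSub H` : `G` is isomorphic to a subgraph of `H`. -/
def IsSub (G H : FGraph) : Prop := ∃ f : G.graph →g H.graph, Function.Injective f

/-- `G.Iso H` : `G` and `H` are isomorphic. -/
def Iso (G H : FGraph) : Prop := Nonempty (G.graph ≃g H.graph)

/-- The induced subgraph of `G` on a set `s` of vertices. -/
noncomputable def induce (G : FGraph) (s : Set G.V) : FGraph := ⟨↥s, G.graph.induce s⟩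

end FGraph

/-- A class of finite graphs. -/
abbrev GProp : Type 1 := FGraph → Prop

/-- A graph property: a nonempty isomorphism-closed class of finite graphs,
each having at least one vertex. -/
structure IsGProp (P : GProp) : Prop where
  nonempty : ∃ G, P G
  vertexNonempty : ∀ G, P G → Nonempty G.V
  isoClosed : ∀ G H, G.Iso H → P G → P H

namespace GProp

/-- The product `P ∘ Q` of two classes of graphs. -/
def prod (P Q : GProp) : GProp := fun G =>
  Nonempty G.V ∧ ∃ s : Set G.V,
    (s.Nonempty → P (G.induce s)) ∧ ((sᶜ : Set G.V).Nonempty → Q (G.induce (sᶜ : Set G.V)))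

/-- The product `∏ i, Ps i` of an indexed family of classes of graphs:
the vertex set is partitioned into the (possibly empty) preimages of a map
to the index set, and every nonempty part must induce a graph in the
corresponding class. -/
def iProd {I : Type*} (Ps : I → GProp) : GProp := fun G =>
  Nonempty G.V ∧ ∃ f : G.V → I,
    ∀ i, (f ⁻¹' {i}).Nonempty → Ps i (G.induce (f ⁻¹' {i}))

end GProp

/-- Closed under induced subgraphs with at least one vertex. -/
def IndHereditary (P : GProp) : Prop :=
  ∀ G H : FGraph, P G → H.IsInduced G → Nonempty H.V → P H

/-- Closed under subgraphs with at least one vertex. -/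
def Hereditary (P : GProp) : Prop :=
  ∀ G H : FGraph, P G → H.IsSub G → Nonempty H.V → P H

/-- Closed under induced supergraphs. -/
def GeqHereditary (P : GProp) : Prop :=
  ∀ G H : FGraph, P H → H.IsInduced G → P G


/-- `O(r)`: edgeless graphs on at least one and at most `r` vertices
(`r = ⊤` means all finite edgeless graphs). -/
def Oprop (r : ℕ∞) : GProp := fun G =>
  Nonempty G.V ∧ G.graph = ⊥ ∧ (Fintype.card G.V : ℕ∞) ≤ r

/-- `K(r)`: complete graphs on at least one and at most `r` vertices
(`r = ⊤` means all finite complete graphs). -/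
def Kprop (r : ℕ∞) : GProp := fun G =>
  Nonempty G.V ∧ G.graph = ⊤ ∧ (Fintype.card G.V : ℕ∞) ≤ r

/-- `P` is irreducible: it is not a product of two graph properties both
different from `P`. -/
def IrreducibleProp (P : GProp) : Prop :=
  ¬ ∃ Q₁ Q₂ : GProp, IsGProp Q₁ ∧ IsGProp Q₂ ∧ Q₁ ≠ P ∧ Q₂ ≠ P ∧ P = GProp.prod Q₁ Q₂

/-- `P` has a unique factorisation: there is at most one unordered pair
`{Q₁, Q₂}` of graph properties, both different from `P`, with `P = Q₁ ∘ Q₂`. -/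
def HasUniqueFactorisation (P : GProp) : Prop :=
  ∀ Q₁ Q₂ R₁ R₂ : GProp, IsGProp Q₁ → IsGProp Q₂ → IsGProp R₁ → IsGProp R₂ →
    Q₁ ≠ P → Q₂ ≠ P → R₁ ≠ P → R₂ ≠ P →
    P = GProp.prod Q₁ Q₂ → P = GProp.prod R₁ R₂ →
    (Q₁ = R₁ ∧ Q₂ = R₂) ∨ (Q₁ = R₂ ∧ Q₂ = R₁)

/-!
Passing to complementary graphs exchanges `O` and `K` and commutes with products, so every argument
has a complementary version.

Suppose that `P` is reducible with a unique factorisation. Then `P` omits some graph: otherwise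
`P = O(1) ∘ P' = O(2) ∘ P'` for the class `P'` of its members with at least two vertices. This
allows replacing the two factors by their induced-hereditary closures, which are again different
from `P`. If a factor contains both an edge and a non-edge, then a part `{v}` of a partition can
always be enlarged by a second vertex, so the one-vertex graph can be deleted from that factor
without changing the product, against uniqueness. Hence every factor is edgeless or complete, i.e.
some `O(r)` or `K(s)`. The same deletion excludes `O(∞) ∘ K(s)` with `2 ≤ s`: a part `{v}` is
enlarged by a neighbour of `v` in the other part if there is one, and joins the other part
otherwise.

Conversely, the join of two graphs has at most one partition into two independent sets, so the
factors of `O(r) ∘ O(s)` can be read off from joins. The members of `O(r) ∘ K(s)` are split graphs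
and thus have no induced 4-cycle. Gluing suitable members of two factors into a 4-cycle, or into
its complement, shows that one factor is edgeless and the other one complete; the sizes of
independent sets and cliques in disjoint unions and joins then recover `r` and `s`.
-/

namespace FGraph

lemma Iso.symm {G H : FGraph} (h : G.Iso H) : H.Iso G := h.map RelIso.symm

lemma induce_univ_iso (G : FGraph) : (G.induce Set.univ).Iso G :=
  ⟨SimpleGraph.induceUnivIso G.graph⟩

lemma card_induce (G : FGraph) (s : Set G.V) : Fintype.card (G.induce s).V = s.ncard :=
  Fintype.card_eq_nat_card

lemma induce_graph_eq_top_iff {G : FGraph} {s : Set G.V} :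
    (G.induce s).graph = ⊤ ↔ G.graph.IsClique s :=
  SimpleGraph.induce_eq_top

lemma induce_graph_eq_bot_iff {G : FGraph} {s : Set G.V} :
    (G.induce s).graph = ⊥ ↔ G.graph.IsIndepSet s := by
  rw [SimpleGraph.eq_bot_iff_forall_not_adj]
  exact ⟨fun h u hu v hv _ ↦ h ⟨u, hu⟩ ⟨v, hv⟩,
    fun h u v huv ↦ h u.2 v.2 (Subtype.coe_ne_coe.2 huv.ne) huv⟩

lemma induce_isInduced_induce {G : FGraph} {s t : Set G.V} (h : s ⊆ t) :
    (G.induce s).IsInduced (G.induce t) :=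
  ⟨SimpleGraph.induceHomOfLE G.graph h⟩

lemma induce_range_iso {A G : FGraph} (f : A.graph ↪g G.graph) : (G.induce (Set.range f)).Iso A :=
  Iso.symm ⟨⟨Equiv.ofInjective f f.injective, f.map_adj_iff⟩⟩

/-- The one-vertex graph. -/
def point : FGraph := ⟨Unit, ⊥⟩

/-- The graph obtained from the disjoint union of `A` and `B` by adding the edges between a vertex
of `A` and a vertex of `B` prescribed by `R`: the disjoint union itself for `R = ⊥`, the join of
`A` and `B` for `R = ⊤`. -/
def glue (A B : FGraph) (R : A.V → B.V → Prop) : FGraph where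
  V := A.V ⊕ B.V
  graph :=
    { Adj
        | .inl a, .inl a' => A.graph.Adj a a'
        | .inl a, .inr b => R a b
        | .inr b, .inl a => R a b
        | .inr b, .inr b' => B.graph.Adj b b'
      symm := ⟨by
        rintro (a | b) (a' | b') h
        exacts [A.graph.adj_symm h, h, h, B.graph.adj_symm h]⟩
      loopless := ⟨by
        rintro (a | b) h
        exacts [A.graph.irrefl h, B.graph.irrefl h]⟩ }

section Glue

variable {A B : FGraph} {R : A.V → B.V → Prop}

lemma glue_induce_range_inl_iso : ((A.glue B R).induce (Set.range Sum.inl)).Iso A :=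
  induce_range_iso (G := A.glue B R) ⟨.inl, Iff.rfl⟩

lemma glue_induce_compl_range_inl_iso : ((A.glue B R).induce (Set.range Sum.inl)ᶜ).Iso B := by
  have hcompl : (Set.range .inl : Set (A.glue B R).V)ᶜ = Set.range .inr := Set.compl_range_inl
  exact hcompl ▸ induce_range_iso (G := A.glue B R) ⟨.inr, Iff.rfl⟩

lemma exists_isInduced_glue {G : FGraph} {s : Set G.V} (hA : (G.induce s).IsInduced A)
    (hB : (G.induce sᶜ).IsInduced B) : ∃ R, G.IsInduced (A.glue B R) := by
  obtain ⟨f⟩ := hA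
  obtain ⟨g⟩ := hB
  refine ⟨fun a b ↦ ∃ u v, f u = a ∧ g v = b ∧ G.graph.Adj u.1 v.1,
    ⟨(Equiv.Set.sumCompl s).symm.toEmbedding.trans (f.toEmbedding.sumMap g.toEmbedding), ?_⟩⟩
  suffices h : ∀ x y : s ⊕ (sᶜ : Set G.V),
      (A.glue B fun a b ↦ ∃ u v, f u = a ∧ g v = b ∧ G.graph.Adj u.1 v.1).graph.Adj
        (Sum.map f g x) (Sum.map f g y) ↔
      G.graph.Adj (Equiv.Set.sumCompl s x) (Equiv.Set.sumCompl s y) by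
    intro u v
    refine (h ((Equiv.Set.sumCompl s).symm u) ((Equiv.Set.sumCompl s).symm v)).trans ?_
    simp only [Equiv.apply_symm_apply]
  have hcross (u : s) (v : (sᶜ : Set G.V)) :
      (∃ u' v', f u' = f u ∧ g v' = g v ∧ G.graph.Adj u'.1 v'.1) ↔ G.graph.Adj u.1 v.1 := by
    constructor
    · rintro ⟨u', v', hu, hv, huv⟩
      rwa [f.injective hu, g.injective hv] at huv
    · exact fun huv ↦ ⟨u, v, rfl, rfl, huv⟩
  rintro (u | u) (v | v)
  · exact f.map_adj_iff
  · exact hcross u v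
  · exact (hcross v u).trans (G.graph.adj_comm _ _)
  · exact g.map_adj_iff

end Glue

/-- The complement of a graph. -/
def compl (G : FGraph) : FGraph := ⟨G.V, G.graphᶜ⟩

@[simp] lemma compl_compl (G : FGraph) : G.compl.compl = G :=
  congrArg (fun H ↦ (⟨G.V, H⟩ : FGraph)) (_root_.compl_compl G.graph)

lemma induce_compl (G : FGraph) (s : Set G.V) :
    (G.induce s).compl = G.compl.induce s := by
  unfold compl induce
  congr 1
  ext a b
  simp [Subtype.ext_iff]

lemma IsInduced.compl {G H : FGraph} (h : G.IsInduced H) : G.compl.IsInduced H.compl :=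
  h.map SimpleGraph.Embedding.complEquiv

lemma Iso.compl {G H : FGraph} (h : G.Iso H) : G.compl.Iso H.compl := by
  obtain ⟨e⟩ := h
  exact ⟨⟨e.toEquiv, (SimpleGraph.Embedding.complEquiv e.toEmbedding).map_adj_iff⟩⟩

/-- `G` is a split graph: its vertex set is the union of an independent set and a clique. -/
def IsSplit (G : FGraph) : Prop := ∃ t : Set G.V, G.graph.IsIndepSet t ∧ G.graph.IsClique tᶜ

lemma IsSplit.compl {G : FGraph} (h : G.IsSplit) : G.compl.IsSplit := by
  obtain ⟨t, hi, hc⟩ := h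
  exact ⟨(tᶜ : Set G.V), (SimpleGraph.isIndepSet_compl _).2 hc,
    (SimpleGraph.isClique_compl _).2 ((_root_.compl_compl t).symm ▸ hi)⟩

lemma IsSplit.exists_chord {G : FGraph} (h : G.IsSplit) {a b c d : G.V} (hac : a ≠ c)
    (hbd : b ≠ d) (hab : G.graph.Adj a b) (hbc : G.graph.Adj b c) (hcd : G.graph.Adj c d)
    (hda : G.graph.Adj d a) : G.graph.Adj a c ∨ G.graph.Adj b d := by
  obtain ⟨t, hi, hc⟩ := h
  have hedge {u v : G.V} (huv : G.graph.Adj u v) : u ∉ t ∨ v ∉ t := by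
    by_contra! hcon
    exact hi hcon.1 hcon.2 huv.ne huv
  have hchord {u v : G.V} (huv : u ≠ v) : G.graph.Adj u v ∨ u ∈ t ∨ v ∈ t := by
    by_contra! hcon
    exact hcon.1 (hc hcon.2.1 hcon.2.2 huv)
  have h₁ := hedge hab
  have h₂ := hedge hbc
  have h₃ := hedge hcd
  have h₄ := hedge hda
  have h₅ := hchord hac
  have h₆ := hchord hbd
  tauto

end FGraph

lemma IsGProp.iff_of_iso {P : GProp} (hP : IsGProp P) {G H : FGraph} (h : G.Iso H) : P G ↔ P H :=
  ⟨hP.isoClosed _ _ h, hP.isoClosed _ _ h.symm⟩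

namespace IndHereditary

variable {Q : GProp}

lemma isGProp (hQ : IndHereditary Q) (hne : ∃ G, Q G) (hv : ∀ G, Q G → Nonempty G.V) :
    IsGProp Q :=
  ⟨hne, hv, fun G H ⟨e⟩ hG ↦ hQ G H hG ⟨e.symm.toEmbedding⟩ ((hv G hG).map e)⟩

lemma induce_mono (hQ : IndHereditary Q) {G : FGraph} {s t : Set G.V} (hst : s ⊆ t)
    (hs : s.Nonempty) (ht : Q (G.induce t)) : Q (G.induce s) :=
  hQ _ _ ht (FGraph.induce_isInduced_induce hst) hs.to_subtype

lemma of_subsingleton (hQ : IndHereditary Q) (gQ : IsGProp Q) (G : FGraph) [Nonempty G.V]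
    [Subsingleton G.V] : Q G := by
  obtain ⟨A, hA⟩ := gQ.nonempty
  obtain ⟨a⟩ := gQ.vertexNonempty A hA
  refine hQ A G hA ⟨⟨⟨fun _ ↦ a, fun u v _ ↦ Subsingleton.elim u v⟩, fun {u v} ↦ ?_⟩⟩ ‹_›
  simp [Subsingleton.elim u v]

lemma point_mem (hQ : IndHereditary Q) (gQ : IsGProp Q) : Q FGraph.point :=
  haveI : Nonempty FGraph.point.V := ⟨()⟩
  haveI : Subsingleton FGraph.point.V := inferInstanceAs (Subsingleton Unit)
  hQ.of_subsingleton gQ FGraph.point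

end IndHereditary

namespace GProp

section Prod

variable {P Q : GProp}

lemma prod_comm (P Q : GProp) : P.prod Q = Q.prod P := by
  have h (P Q : GProp) : P.prod Q ≤ Q.prod P := fun G ⟨hG, s, h₁, h₂⟩ ↦
    ⟨hG, sᶜ, h₂, (compl_compl s).symm ▸ h₁⟩
  exact (h P Q).antisymm (h Q P)

lemma prod_mono {P' Q' : GProp} (hP : P ≤ P') (hQ : Q ≤ Q') : P.prod Q ≤ P'.prod Q' :=
  fun _ ⟨hG, s, h₁, h₂⟩ ↦ ⟨hG, s, fun h ↦ hP _ (h₁ h), fun h ↦ hQ _ (h₂ h)⟩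

lemma le_prod_left (hP : IsGProp P) : P ≤ P.prod Q := fun G hG ↦
  ⟨hP.vertexNonempty G hG, Set.univ,
    fun _ ↦ (hP.iff_of_iso G.induce_univ_iso).2 hG, by simp⟩

lemma le_prod_right (hQ : IsGProp Q) : Q ≤ P.prod Q :=
  prod_comm Q P ▸ le_prod_left hQ

lemma prod_glue (hP : IsGProp P) (hQ : IsGProp Q) {A B : FGraph} (hA : P A) (hB : Q B)
    (R : A.V → B.V → Prop) : P.prod Q (A.glue B R) :=
  ⟨(hP.vertexNonempty A hA).map .inl, (Set.range .inl : Set (A.glue B R).V),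
    fun _ ↦ (hP.iff_of_iso FGraph.glue_induce_range_inl_iso).2 hA,
    fun _ ↦ (hQ.iff_of_iso FGraph.glue_induce_compl_range_inl_iso).2 hB⟩

end Prod

/-- The class of all nonempty induced subgraphs of members of `Q`: the smallest induced-hereditary
property containing `Q`. -/
def inducedClosure (Q : GProp) : GProp := fun H ↦ Nonempty H.V ∧ ∃ G, Q G ∧ H.IsInduced G

lemma indHereditary_inducedClosure (Q : GProp) : IndHereditary Q.inducedClosure :=
  fun _ _ ⟨_, K, hK, ⟨f⟩⟩ ⟨g⟩ hH ↦ ⟨hH, K, hK, ⟨f.comp g⟩⟩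

lemma le_inducedClosure {Q : GProp} (hQ : IsGProp Q) : Q ≤ Q.inducedClosure :=
  fun G hG ↦ ⟨hQ.vertexNonempty G hG, G, hG, ⟨SimpleGraph.Embedding.refl⟩⟩

lemma isGProp_inducedClosure {Q : GProp} (hQ : IsGProp Q) : IsGProp Q.inducedClosure :=
  Q.indHereditary_inducedClosure.isGProp (hQ.nonempty.imp (le_inducedClosure hQ)) fun _ h ↦ h.1

lemma exists_isInduced_of_inducedClosure {Q : GProp} (hQ : IsGProp Q) {G : FGraph} {s : Set G.V}
    (h : s.Nonempty → Q.inducedClosure (G.induce s)) : ∃ A, Q A ∧ (G.induce s).IsInduced A := by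
  rcases s.eq_empty_or_nonempty with rfl | hs
  · obtain ⟨A, hA⟩ := hQ.nonempty
    exact ⟨A, hA, ⟨⟨⟨fun v ↦ v.2.elim, fun v ↦ v.2.elim⟩, fun {v} ↦ v.2.elim⟩⟩⟩
  · exact (h hs).2

lemma prod_inducedClosure {Q₁ Q₂ : GProp} (h : IndHereditary (Q₁.prod Q₂)) (h₁ : IsGProp Q₁)
    (h₂ : IsGProp Q₂) : Q₁.inducedClosure.prod Q₂.inducedClosure = Q₁.prod Q₂ := by
  refine le_antisymm (fun G ⟨hG, s, hs, hsc⟩ ↦ ?_)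
    (prod_mono (le_inducedClosure h₁) (le_inducedClosure h₂))
  obtain ⟨A, hA, hsA⟩ := exists_isInduced_of_inducedClosure h₁ hs
  obtain ⟨B, hB, hsB⟩ := exists_isInduced_of_inducedClosure h₂ hsc
  obtain ⟨R, hR⟩ := FGraph.exists_isInduced_glue hsA hsB
  exact h _ G (prod_glue h₁ h₂ hA hB R) hR hG

/-- The class of the graphs whose complement lies in `P` (not the complement of `P` as a class). It
exchanges edgeless and complete graphs and commutes with products. -/
def co (P : GProp) : GProp := fun G ↦ P G.compl

@[simp] lemma co_co (P : GProp) : P.co.co = P :=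
  funext fun G ↦ congrArg P G.compl_compl

lemma co_injective : Function.Injective co :=
  Function.LeftInverse.injective co_co

lemma co_mono {P Q : GProp} (h : P ≤ Q) : P.co ≤ Q.co := fun G ↦ h G.compl

lemma co_prod (P Q : GProp) : (P.prod Q).co = P.co.prod Q.co := by
  funext G
  simp only [prod, co, FGraph.induce_compl]
  rfl

lemma co_Oprop (r : ℕ∞) : (Oprop r).co = Kprop r := by
  funext G
  exact propext (and_congr_right' (and_congr_left' compl_eq_bot))

lemma co_Kprop (r : ℕ∞) : (Kprop r).co = Oprop r := by
  rw [← co_Oprop, co_co]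

/-- Every member of `Q` is an edgeless graph. -/
def IsEdgeless (Q : GProp) : Prop := ∀ A, Q A → A.graph = ⊥

/-- Every member of `Q` is a complete graph. -/
def IsComplete (Q : GProp) : Prop := ∀ A, Q A → A.graph = ⊤

lemma isEdgeless_co {Q : GProp} : Q.co.IsEdgeless ↔ Q.IsComplete :=
  ⟨fun h A hA ↦ compl_eq_bot.1 (h A.compl (by rwa [co, A.compl_compl])),
    fun h A hA ↦ compl_eq_top.1 (h A.compl hA)⟩

lemma isComplete_co {Q : GProp} : Q.co.IsComplete ↔ Q.IsEdgeless := by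
  rw [← isEdgeless_co, co_co]

lemma isEdgeless_Oprop (r : ℕ∞) : (Oprop r).IsEdgeless := fun _ h ↦ h.2.1

lemma isComplete_Kprop (r : ℕ∞) : (Kprop r).IsComplete := fun _ h ↦ h.2.1

lemma Oprop_one_eq_Kprop_one : Oprop 1 = Kprop 1 := by
  funext G
  refine propext (and_congr_right' (and_congr_left fun h ↦ ?_))
  have : Subsingleton G.V := Fintype.card_le_one_iff_subsingleton.1 (by exact_mod_cast h)
  simp only [Subsingleton.elim (⊥ : SimpleGraph G.V) ⊤]

end GProp

open GProp

lemma IsGProp.co {P : GProp} (hP : IsGProp P) : IsGProp P.co := by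
  obtain ⟨A, hA⟩ := hP.nonempty
  exact ⟨⟨A.compl, by rwa [GProp.co, A.compl_compl]⟩, fun G hG ↦ hP.vertexNonempty G.compl hG,
    fun G H h ↦ hP.isoClosed _ _ h.compl⟩

lemma IndHereditary.co {P : GProp} (hP : IndHereditary P) : IndHereditary P.co :=
  fun G H hG h ↦ hP G.compl H.compl hG h.compl

lemma HasUniqueFactorisation.co {P : GProp} (h : HasUniqueFactorisation P) :
    HasUniqueFactorisation P.co := by
  intro Q₁ Q₂ R₁ R₂ hQ₁ hQ₂ hR₁ hR₂ nQ₁ nQ₂ nR₁ nR₂ hQ hR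
  have hne {Q : GProp} (hQ : Q ≠ P.co) : Q.co ≠ P := fun h ↦ hQ (by rw [← h, co_co])
  have hprod {Q Q' : GProp} (hQ : P.co = Q.prod Q') : P = Q.co.prod Q'.co := by
    rw [← co_prod, ← hQ, co_co]
  simpa only [co_injective.eq_iff] using
    h Q₁.co Q₂.co R₁.co R₂.co hQ₁.co hQ₂.co hR₁.co hR₂.co (hne nQ₁) (hne nQ₂) (hne nR₁) (hne nR₂)
      (hprod hQ) (hprod hR)

lemma indHereditary_Oprop (r : ℕ∞) : IndHereditary (Oprop r) := by
  rintro G H ⟨-, hG, hr⟩ ⟨f⟩ hH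
  refine ⟨hH, ?_, le_trans (by exact_mod_cast Fintype.card_le_of_embedding f.toEmbedding) hr⟩
  ext u v
  simp [← f.map_adj_iff, hG]

lemma indHereditary_Kprop (r : ℕ∞) : IndHereditary (Kprop r) :=
  co_Oprop r ▸ (indHereditary_Oprop r).co

lemma isGProp_Oprop {r : ℕ∞} (hr : 1 ≤ r) : IsGProp (Oprop r) :=
  (indHereditary_Oprop r).isGProp ⟨FGraph.point, ⟨()⟩, rfl, Nat.cast_one.le.trans hr⟩
    fun _ h ↦ h.1

lemma isGProp_Kprop {r : ℕ∞} (hr : 1 ≤ r) : IsGProp (Kprop r) :=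
  co_Oprop r ▸ (isGProp_Oprop hr).co

namespace IndHereditary

variable {Q : GProp}

lemma induce_pair_of_adj (hQ : IndHereditary Q) (h : ¬ Q.IsEdgeless) {G : FGraph} {v w : G.V}
    (hvw : G.graph.Adj v w) : Q (G.induce {v, w}) := by
  simp only [IsEdgeless, not_forall, ← ne_eq, SimpleGraph.ne_bot_iff_exists_adj] at h
  obtain ⟨A, hA, a, b, hab⟩ := h
  let f (x : ({v, w} : Set G.V)) : A.V := if x.1 = v then a else b
  have hf {x y : ({v, w} : Set G.V)} (hxy : x ≠ y) :
      G.graph.Adj x.1 y.1 ∧ A.graph.Adj (f x) (f y) := by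
    obtain ⟨x, rfl | rfl⟩ := x <;> obtain ⟨y, rfl | rfl⟩ := y
    · exact (hxy rfl).elim
    · exact ⟨hvw, by simpa only [f, if_pos, if_neg hvw.ne'] using hab⟩
    · exact ⟨hvw.symm, by simpa only [f, if_pos, if_neg hvw.ne'] using hab.symm⟩
    · exact (hxy rfl).elim
  exact hQ A _ hA ⟨⟨⟨f, fun x y e ↦ by_contra fun hxy ↦ (hf hxy).2.ne e⟩,
    fun h ↦ (hf (ne_of_apply_ne f h.ne)).1, fun h ↦ (hf h.ne).2⟩⟩ ⟨v, .inl rfl⟩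

lemma induce_pair_of_not_adj (hQ : IndHereditary Q) (h : ¬ Q.IsComplete) {G : FGraph} {v w : G.V}
    (hne : v ≠ w) (hvw : ¬ G.graph.Adj v w) : Q (G.induce {v, w}) := by
  have hco : Q.co (G.induce {v, w}).compl := by
    rw [FGraph.induce_compl]
    exact hQ.co.induce_pair_of_adj (isEdgeless_co.not.2 h)
      ((SimpleGraph.compl_adj _ v w).2 ⟨hne, hvw⟩)
  rwa [GProp.co, FGraph.compl_compl] at hco

lemma exists_eq_Oprop (hQ : IndHereditary Q) (gQ : IsGProp Q) (h : Q.IsEdgeless) :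
    ∃ r, 1 ≤ r ∧ Q = Oprop r := by
  set r : ℕ∞ := ⨆ (A) (_ : Q A), (Fintype.card A.V : ℕ∞) with hr
  have hle (A : FGraph) (hA : Q A) : (Fintype.card A.V : ℕ∞) ≤ r :=
    le_iSup₂ (f := fun (A : FGraph) (_ : Q A) ↦ (Fintype.card A.V : ℕ∞)) A hA
  refine ⟨r, Nat.cast_one.symm.le.trans (hle _ (hQ.point_mem gQ)),
    le_antisymm (fun A hA ↦ ⟨gQ.vertexNonempty A hA, h A hA, hle A hA⟩) ?_⟩
  rintro G ⟨hG, hbot, hcard⟩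
  obtain ⟨n, hn⟩ := Nat.exists_eq_succ_of_ne_zero (Fintype.card_ne_zero (α := G.V))
  have hlt : (n : ℕ∞) < r := lt_of_lt_of_le (by exact_mod_cast hn ▸ n.lt_succ_self) hcard
  simp only [hr, lt_iSup_iff, Nat.cast_lt] at hlt
  obtain ⟨A, hA, hnA⟩ := hlt
  obtain ⟨f⟩ := Function.Embedding.nonempty_of_card_le (hn.trans_le hnA)
  exact hQ A G hA ⟨⟨f, by simp [hbot, h A hA]⟩⟩ hG

lemma exists_eq_Kprop (hQ : IndHereditary Q) (gQ : IsGProp Q) (h : Q.IsComplete) :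
    ∃ r, 1 ≤ r ∧ Q = Kprop r := by
  obtain ⟨r, hr, hco⟩ := hQ.co.exists_eq_Oprop gQ.co (isEdgeless_co.2 h)
  exact ⟨r, hr, co_injective (hco.trans (co_Kprop r).symm)⟩

end IndHereditary

namespace GProp

/-- The class of the members of `Q` with at least two vertices. Replacing a factor by this part
without changing the product is the source of non-unique factorisations. -/
def nontrivialPart (Q : GProp) : GProp := fun G ↦ Q G ∧ Nontrivial G.V

lemma isGProp_nontrivialPart {Q : GProp} (hQ : IsGProp Q) (h : ∃ G, Q.nontrivialPart G) :
    IsGProp Q.nontrivialPart :=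
  ⟨h, fun G hG ↦ hQ.vertexNonempty G hG.1,
    fun G H ⟨e⟩ ⟨hG, _⟩ ↦ ⟨hQ.isoClosed G H ⟨e⟩ hG, e.symm.toEquiv.nontrivial⟩⟩

lemma nontrivialPart_ne {P : GProp} (hP : IndHereditary P) (gP : IsGProp P) (Q : GProp) :
    Q.nontrivialPart ≠ P := by
  rintro rfl
  exact not_nontrivial Unit (hP.point_mem gP).2

lemma exists_nontrivialPart_of_not_isEdgeless {Q : GProp} (h : ¬ Q.IsEdgeless) :
    ∃ G, Q.nontrivialPart G := by
  simp only [IsEdgeless, not_forall] at h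
  obtain ⟨A, hA, hne⟩ := h
  exact ⟨A, hA, SimpleGraph.nontrivial_iff.1 ⟨_, _, hne⟩⟩

lemma prod_nontrivialPart {Q₁ Q₂ : GProp} (g₂ : IsGProp Q₂) (i₂ : IndHereditary Q₂)
    (h : ∀ (G : FGraph) (v : G.V), (({v}ᶜ : Set G.V).Nonempty → Q₂ (G.induce {v}ᶜ)) →
      Q₂ G ∨ ∃ w ≠ v, Q₁ (G.induce {v, w})) :
    Q₁.nontrivialPart.prod Q₂ = Q₁.prod Q₂ := by
  refine le_antisymm (prod_mono (fun _ hG ↦ hG.1) le_rfl) (fun G ⟨hG, s, hs, hsc⟩ ↦ ?_)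
  rcases s.eq_empty_or_nonempty with rfl | hne
  · exact ⟨hG, ∅, fun h ↦ (Set.not_nonempty_empty h).elim, hsc⟩
  rcases hne.exists_eq_singleton_or_nontrivial with ⟨v, rfl⟩ | hnt
  · rcases h G v hsc with hQ | ⟨w, hwv, hQ⟩
    · exact le_prod_right g₂ G hQ
    · have hsub : ({v, w}ᶜ : Set G.V) ⊆ {v}ᶜ := Set.compl_subset_compl.2 (by simp)
      exact ⟨hG, {v, w}, fun _ ↦ ⟨hQ, (Set.nontrivial_pair hwv.symm).coe_sort⟩,
        fun hne ↦ i₂.induce_mono hsub hne (hsc (hne.mono hsub))⟩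
  · exact ⟨hG, s, fun h ↦ ⟨hs h, hnt.coe_sort⟩, hsc⟩

end GProp

namespace HasUniqueFactorisation

variable {P : GProp}

lemma of_irreducible (h : IrreducibleProp P) : HasUniqueFactorisation P :=
  fun Q₁ Q₂ _ _ g₁ g₂ _ _ n₁ n₂ _ _ e _ ↦ (h ⟨Q₁, Q₂, g₁, g₂, n₁, n₂, e⟩).elim

lemma of_forall {A B : GProp} (h : ∀ Q₁ Q₂, IsGProp Q₁ → IsGProp Q₂ → P = Q₁.prod Q₂ →
    (Q₁ = A ∧ Q₂ = B) ∨ (Q₁ = B ∧ Q₂ = A)) : HasUniqueFactorisation P := by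
  intro Q₁ Q₂ R₁ R₂ gQ₁ gQ₂ gR₁ gR₂ _ _ _ _ hQ hR
  rcases h Q₁ Q₂ gQ₁ gQ₂ hQ with ⟨rfl, rfl⟩ | ⟨rfl, rfl⟩
  · exact (h R₁ R₂ gR₁ gR₂ hR).imp (fun h ↦ ⟨h.1.symm, h.2.symm⟩) fun h ↦ ⟨h.2.symm, h.1.symm⟩
  · exact (h R₁ R₂ gR₁ gR₂ hR).symm.imp (fun h ↦ ⟨h.1.symm, h.2.symm⟩)
      fun h ↦ ⟨h.2.symm, h.1.symm⟩

lemma left_unique (h : HasUniqueFactorisation P) {A A' B : GProp} (gA : IsGProp A)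
    (gA' : IsGProp A') (gB : IsGProp B) (nA : A ≠ P) (nA' : A' ≠ P) (nB : B ≠ P)
    (e : P = A.prod B) (e' : P = A'.prod B) : A = A' := by
  rcases h A B A' B gA gB gA' gB nA nB nA' nB e e' with ⟨rfl, -⟩ | ⟨rfl, rfl⟩ <;> rfl

lemma not_forall_mem (h : HasUniqueFactorisation P) (hP : IndHereditary P) (gP : IsGProp P) :
    ∃ G : FGraph, Nonempty G.V ∧ ¬ P G := by
  by_contra! hall
  let K₂ : FGraph := ⟨Bool, ⊤⟩
  have hK₂ : P.nontrivialPart K₂ := ⟨hall K₂ ⟨true⟩, inferInstanceAs (Nontrivial Bool)⟩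
  have habsorb {r : ℕ∞} (hr : 1 ≤ r) : P = (Oprop r).prod P.nontrivialPart := by
    refine le_antisymm (fun G hG ↦ ?_) fun G hG ↦ hall G hG.1
    have := gP.vertexNonempty G hG
    rcases subsingleton_or_nontrivial G.V with _ | hnt
    · exact le_prod_left (isGProp_Oprop hr) G
        ((indHereditary_Oprop r).of_subsingleton (isGProp_Oprop hr) G)
    · exact le_prod_right (isGProp_nontrivialPart gP ⟨K₂, hK₂⟩) G ⟨hG, hnt⟩
  have hne (r : ℕ∞) : Oprop r ≠ P := by
    rintro rfl
    exact top_ne_bot (α := SimpleGraph Bool) hK₂.1.2.1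
  have h12 : Oprop 1 = Oprop 2 :=
    h.left_unique (isGProp_Oprop le_rfl) (isGProp_Oprop one_le_two)
      (isGProp_nontrivialPart gP ⟨K₂, hK₂⟩) (hne 1) (hne 2) (nontrivialPart_ne hP gP P)
      (habsorb le_rfl) (habsorb one_le_two)
  have hmem : Oprop 1 ⟨Bool, ⊥⟩ := h12 ▸ ⟨⟨true⟩, rfl, Nat.cast_two.le⟩
  exact absurd hmem.2.2 (by simp)

lemma prod_nontrivialPart_ne {Q₁ Q₂ : GProp} (h : HasUniqueFactorisation (Q₁.prod Q₂))
    (hP : IndHereditary (Q₁.prod Q₂)) (i₁ : IndHereditary Q₁) (g₁ : IsGProp Q₁) (g₂ : IsGProp Q₂)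
    (n₁ : Q₁ ≠ Q₁.prod Q₂) (n₂ : Q₂ ≠ Q₁.prod Q₂) (hQ : ¬ Q₁.IsEdgeless) :
    Q₁.nontrivialPart.prod Q₂ ≠ Q₁.prod Q₂ := by
  intro e
  have gP : IsGProp (Q₁.prod Q₂) :=
    hP.isGProp (g₁.nonempty.imp (le_prod_left g₁)) fun _ h ↦ h.1
  exact nontrivialPart_ne i₁ g₁ Q₁ (h.left_unique
    (isGProp_nontrivialPart g₁ (exists_nontrivialPart_of_not_isEdgeless hQ)) g₁ g₂
    (nontrivialPart_ne hP gP Q₁) n₁ n₂ e.symm rfl)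

lemma isEdgeless_or_isComplete {Q₁ Q₂ : GProp} (h : HasUniqueFactorisation (Q₁.prod Q₂))
    (hP : IndHereditary (Q₁.prod Q₂)) (i₁ : IndHereditary Q₁) (g₁ : IsGProp Q₁)
    (i₂ : IndHereditary Q₂) (g₂ : IsGProp Q₂) (n₁ : Q₁ ≠ Q₁.prod Q₂) (n₂ : Q₂ ≠ Q₁.prod Q₂) :
    Q₁.IsEdgeless ∨ Q₁.IsComplete := by
  by_contra! ⟨he, hc⟩
  refine h.prod_nontrivialPart_ne hP i₁ g₁ g₂ n₁ n₂ he
    (prod_nontrivialPart g₂ i₂ fun G v _ ↦ ?_)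
  have : Nonempty G.V := ⟨v⟩
  rcases subsingleton_or_nontrivial G.V with _ | _
  · exact .inl (i₂.of_subsingleton g₂ G)
  · obtain ⟨w, hwv⟩ := exists_ne v
    refine .inr ⟨w, hwv, ?_⟩
    by_cases hvw : G.graph.Adj v w
    · exact i₁.induce_pair_of_adj he hvw
    · exact i₁.induce_pair_of_not_adj hc hwv.symm hvw

lemma isEdgeless_of_prod_Oprop_top {Q : GProp} (h : HasUniqueFactorisation (Q.prod (Oprop ⊤)))
    (hP : IndHereditary (Q.prod (Oprop ⊤))) (i : IndHereditary Q) (g : IsGProp Q)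
    (n₁ : Q ≠ Q.prod (Oprop ⊤)) (n₂ : Oprop ⊤ ≠ Q.prod (Oprop ⊤)) : Q.IsEdgeless := by
  by_contra he
  refine h.prod_nontrivialPart_ne hP i g (isGProp_Oprop le_top) n₁ n₂ he
    (prod_nontrivialPart (isGProp_Oprop le_top) (indHereditary_Oprop ⊤) fun G v hv ↦ ?_)
  by_cases hvw : ∃ w, G.graph.Adj v w
  · obtain ⟨w, hvw⟩ := hvw
    exact .inr ⟨w, hvw.ne', i.induce_pair_of_adj he hvw⟩
  · refine .inl ⟨⟨v⟩, ?_, le_top⟩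
    push Not at hvw
    refine SimpleGraph.eq_bot_iff_forall_not_adj.2 fun x y hxy ↦ ?_
    have hx : x ≠ v := fun e ↦ hvw y (e ▸ hxy)
    have hy : y ≠ v := fun e ↦ hvw x (e ▸ hxy.symm)
    have hadj : (G.induce {v}ᶜ).graph.Adj ⟨x, hx⟩ ⟨y, hy⟩ := hxy
    rw [(hv ⟨x, hx⟩).2.1] at hadj
    exact hadj

end HasUniqueFactorisation

lemma GProp.forall_mem_of_prod_eq_self {P R : GProp} (iR : IndHereditary R) (gR : IsGProp R)
    (h : P.prod R = P) (G : FGraph) (hG : Nonempty G.V) : P G := by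
  induction hn : Fintype.card G.V using Nat.strong_induction_on generalizing G with
  | _ n ih =>
    obtain ⟨v⟩ := hG
    rw [← h]
    refine ⟨⟨v⟩, {v}ᶜ, fun hne ↦ ih _ ?_ _ hne.to_subtype rfl, fun _ ↦ ?_⟩
    · exact hn ▸ Fintype.card_lt_of_injective_of_notMem Subtype.val Subtype.val_injective (b := v)
        fun ⟨w, hw⟩ ↦ w.2 hw
    · rw [compl_compl]
      have : Nonempty (G.induce {v}).V := ⟨⟨v, rfl⟩⟩
      have : Subsingleton (G.induce {v}).V := Set.subsingleton_singleton.coe_sort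
      exact iR.of_subsingleton gR _

lemma IndHereditary.exists_factorisation {P : GProp} (hP : IndHereditary P)
    (hne : ∃ G : FGraph, Nonempty G.V ∧ ¬ P G) (hred : ¬ IrreducibleProp P) :
    ∃ A B : GProp, IsGProp A ∧ IsGProp B ∧ IndHereditary A ∧ IndHereditary B ∧ A ≠ P ∧ B ≠ P ∧
      P = A.prod B := by
  obtain ⟨Q₁, Q₂, g₁, g₂, -, -, rfl⟩ := not_not.1 hred
  have hprod := prod_inducedClosure hP g₁ g₂
  have hfactor {A B : GProp} (gB : IsGProp B) (iB : IndHereditary B)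
      (h : A.prod B = Q₁.prod Q₂) : A ≠ Q₁.prod Q₂ := by
    rintro rfl
    obtain ⟨G, hG, hG'⟩ := hne
    exact hG' (forall_mem_of_prod_eq_self iB gB h G hG)
  have g₁' := isGProp_inducedClosure g₁
  have g₂' := isGProp_inducedClosure g₂
  have i₁' := Q₁.indHereditary_inducedClosure
  have i₂' := Q₂.indHereditary_inducedClosure
  exact ⟨_, _, g₁', g₂', i₁', i₂', hfactor g₂' i₂' hprod,
    hfactor g₁' i₁' ((prod_comm _ _).trans hprod), hprod.symm⟩

namespace HasUniqueFactorisation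

lemma eq_one_of_prod_Kprop_Oprop_top {s : ℕ∞} (hs : 1 ≤ s)
    (h : HasUniqueFactorisation ((Kprop s).prod (Oprop ⊤)))
    (hP : IndHereditary ((Kprop s).prod (Oprop ⊤))) (n₁ : Kprop s ≠ (Kprop s).prod (Oprop ⊤))
    (n₂ : Oprop ⊤ ≠ (Kprop s).prod (Oprop ⊤)) : s = 1 := by
  have he := h.isEdgeless_of_prod_Oprop_top hP (indHereditary_Kprop s) (isGProp_Kprop hs) n₁ n₂
  refine (le_of_not_gt fun hlt ↦ ?_).antisymm hs
  have hK₂ : Kprop s ⟨Bool, ⊤⟩ := ⟨⟨true⟩, rfl, Order.add_one_le_of_lt hlt⟩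
  exact top_ne_bot (he _ hK₂)

lemma prod_Oprop_Kprop_cases {r s : ℕ∞} (hr : 1 ≤ r) (hs : 1 ≤ s)
    (h : HasUniqueFactorisation ((Oprop r).prod (Kprop s)))
    (hP : IndHereditary ((Oprop r).prod (Kprop s))) (n₁ : Oprop r ≠ (Oprop r).prod (Kprop s))
    (n₂ : Kprop s ≠ (Oprop r).prod (Kprop s)) : r = 1 ∨ s = 1 ∨ (r ≠ ⊤ ∧ s ≠ ⊤) := by
  by_cases hr' : r = ⊤
  · subst hr'
    rw [prod_comm] at h hP n₁ n₂
    exact .inr (.inl (eq_one_of_prod_Kprop_Oprop_top hs h hP n₂ n₁))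
  by_cases hs' : s = ⊤
  · subst hs'
    have hco : ((Oprop r).prod (Kprop ⊤)).co = (Kprop r).prod (Oprop ⊤) := by
      rw [co_prod, co_Oprop, co_Kprop]
    refine .inl (eq_one_of_prod_Kprop_Oprop_top hr (hco ▸ h.co) (hco ▸ hP.co) ?_ ?_)
    · exact hco ▸ co_Oprop r ▸ co_injective.ne n₁
    · exact hco ▸ co_Kprop ⊤ ▸ co_injective.ne n₂
  exact .inr (.inr ⟨hr', hs'⟩)

end HasUniqueFactorisation

lemma IndHereditary.exists_eq_Oprop_or_exists_eq_Kprop {Q : GProp} (i : IndHereditary Q)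
    (g : IsGProp Q) (h : Q.IsEdgeless ∨ Q.IsComplete) :
    (∃ r, 1 ≤ r ∧ Q = Oprop r) ∨ ∃ r, 1 ≤ r ∧ Q = Kprop r :=
  h.imp (i.exists_eq_Oprop g) (i.exists_eq_Kprop g)

namespace HasUniqueFactorisation

lemma cases_of_eq_prod_Oprop_Kprop {P : GProp} {r s : ℕ∞} (h : HasUniqueFactorisation P)
    (hP : IndHereditary P) (hr : 1 ≤ r) (hs : 1 ≤ s) (nr : Oprop r ≠ P) (ns : Kprop s ≠ P)
    (e : P = (Oprop r).prod (Kprop s)) :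
    (∃ r s : ℕ∞, 1 ≤ r ∧ 1 ≤ s ∧ P = (Oprop r).prod (Oprop s)) ∨
    (∃ r s : ℕ∞, 1 ≤ r ∧ 1 ≤ s ∧ P = (Kprop r).prod (Kprop s)) ∨
    (∃ r s : ℕ, 1 ≤ r ∧ 1 ≤ s ∧ P = (Oprop r).prod (Kprop s)) := by
  subst e
  rcases h.prod_Oprop_Kprop_cases hr hs hP nr ns with rfl | rfl | ⟨hr', hs'⟩
  · exact .inr (.inl ⟨1, s, le_rfl, hs, by rw [Oprop_one_eq_Kprop_one]⟩)
  · exact .inl ⟨r, 1, hr, le_rfl, by rw [Oprop_one_eq_Kprop_one]⟩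
  · lift r to ℕ using hr'
    lift s to ℕ using hs'
    exact .inr (.inr ⟨r, s, by exact_mod_cast hr, by exact_mod_cast hs, rfl⟩)

lemma cases_of_reducible {P : GProp} (h : HasUniqueFactorisation P)
    (gP : IsGProp P) (hP : IndHereditary P) (hred : ¬ IrreducibleProp P) :
    (∃ r s : ℕ∞, 1 ≤ r ∧ 1 ≤ s ∧ P = (Oprop r).prod (Oprop s)) ∨
    (∃ r s : ℕ∞, 1 ≤ r ∧ 1 ≤ s ∧ P = (Kprop r).prod (Kprop s)) ∨
    (∃ r s : ℕ, 1 ≤ r ∧ 1 ≤ s ∧ P = (Oprop r).prod (Kprop s)) := by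
  obtain ⟨A, B, gA, gB, iA, iB, nA, nB, e⟩ :=
    hP.exists_factorisation (h.not_forall_mem hP gP) hred
  have hA := iA.exists_eq_Oprop_or_exists_eq_Kprop gA
    (isEdgeless_or_isComplete (e ▸ h) (e ▸ hP) iA gA iB gB (e ▸ nA) (e ▸ nB))
  have e' : P = B.prod A := e.trans (prod_comm A B)
  have hB := iB.exists_eq_Oprop_or_exists_eq_Kprop gB
    (isEdgeless_or_isComplete (e' ▸ h) (e' ▸ hP) iB gB iA gA (e' ▸ nB) (e' ▸ nA))
  rcases hA with ⟨r, hr, rfl⟩ | ⟨r, hr, rfl⟩ <;> rcases hB with ⟨s, hs, rfl⟩ | ⟨s, hs, rfl⟩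
  · exact .inl ⟨r, s, hr, hs, e⟩
  · exact h.cases_of_eq_prod_Oprop_Kprop hP hr hs nA nB e
  · exact h.cases_of_eq_prod_Oprop_Kprop hP hs hr nB nA e'
  · exact .inr (.inl ⟨r, s, hr, hs, e⟩)

end HasUniqueFactorisation

lemma eq_and_eq_or_eq_and_eq_of_forall_and_or_and_iff {α : Type*} {p q p' q' : α → Prop}
    (hp : ∃ x, p x) (hq : ∃ x, q x) (hp' : ∃ x, p' x) (hq' : ∃ x, q' x)
    (h : ∀ x y, (p x ∧ q y) ∨ (q x ∧ p y) ↔ (p' x ∧ q' y) ∨ (q' x ∧ p' y)) :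
    (p = p' ∧ q = q') ∨ (p = q' ∧ q = p') := by
  have hinf (x : α) : p x ∧ q x ↔ p' x ∧ q' x := by simpa only [and_comm, or_self] using h x x
  have hsup (x : α) : p x ∨ q x ↔ p' x ∨ q' x := by
    constructor
    · rintro (hx | hx)
      · exact hq.elim fun y hy ↦ ((h x y).1 (.inl ⟨hx, hy⟩)).imp And.left And.left
      · exact hp.elim fun y hy ↦ ((h x y).1 (.inr ⟨hx, hy⟩)).imp And.left And.left
    · rintro (hx | hx)
      · exact hq'.elim fun y hy ↦ ((h x y).2 (.inl ⟨hx, hy⟩)).imp And.left And.left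
      · exact hp'.elim fun y hy ↦ ((h x y).2 (.inr ⟨hx, hy⟩)).imp And.left And.left
  simp only [funext_iff, eq_iff_iff]
  -- An `x` separating `p` from `q` also separates `p'` from `q'`; if, say, `p` and `p'` agree at
  -- `x`, then the pairs `(x, y)` show that they agree everywhere, and so do `q` and `q'`.
  by_cases hpq : ∀ x, p x ↔ q x
  · refine .inl ⟨fun x ↦ ?_, fun x ↦ ?_⟩ <;> grind only
  · push Not at hpq
    obtain ⟨x, hx⟩ := hpq
    by_cases hx' : p x ↔ p' x
    · refine .inl ⟨fun y ↦ ?_, fun y ↦ ?_⟩ <;> grind only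
    · refine .inr ⟨fun y ↦ ?_, fun y ↦ ?_⟩ <;> grind only

namespace GProp

lemma IsEdgeless.isIndepSet {Q : GProp} (h : Q.IsEdgeless) {G : FGraph} {s : Set G.V}
    (hs : s.Nonempty → Q (G.induce s)) : G.graph.IsIndepSet s := by
  rcases s.eq_empty_or_nonempty with rfl | hne
  · exact Set.pairwise_empty _
  · exact FGraph.induce_graph_eq_bot_iff.1 (h _ (hs hne))

lemma IsComplete.isClique {Q : GProp} (h : Q.IsComplete) {G : FGraph} {s : Set G.V}
    (hs : s.Nonempty → Q (G.induce s)) : G.graph.IsClique s := by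
  rcases s.eq_empty_or_nonempty with rfl | hne
  · exact SimpleGraph.isClique_empty
  · exact FGraph.induce_graph_eq_top_iff.1 (h _ (hs hne))

lemma isEdgeless_of_prod_le {X Y Q₁ Q₂ : GProp} (eX : X.IsEdgeless) (eY : Y.IsEdgeless)
    (g₁ : IsGProp Q₁) (g₂ : IsGProp Q₂) (h : Q₁.prod Q₂ ≤ X.prod Y) : Q₁.IsEdgeless := by
  refine fun A hA ↦ SimpleGraph.eq_bot_iff_forall_not_adj.2 fun a a' haa' ↦ ?_
  obtain ⟨B, hB⟩ := g₂.nonempty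
  obtain ⟨b⟩ := g₂.vertexNonempty B hB
  obtain ⟨-, s, hs, hsc⟩ := h _ (prod_glue g₁ g₂ hA hB ⊤)
  have hedge {x y : (A.glue B ⊤).V} (hxy : (A.glue B ⊤).graph.Adj x y) : x ∈ s ↔ y ∉ s :=
    ⟨fun hx hy ↦ eX.isIndepSet hs hx hy hxy.ne hxy,
      fun hy ↦ by_contra fun hx ↦ eY.isIndepSet hsc hx hy hxy.ne hxy⟩
  have h₁ : Sum.inl a ∈ s ↔ Sum.inl a' ∉ s := hedge haa'
  have h₂ : Sum.inl a ∈ s ↔ Sum.inr b ∉ s := hedge trivial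
  have h₃ : Sum.inl a' ∈ s ↔ Sum.inr b ∉ s := hedge trivial
  tauto

end GProp

lemma FGraph.eq_range_inl_of_isIndepSet {A B : FGraph} {s : Set (A.glue B ⊤).V}
    (hs : (A.glue B ⊤).graph.IsIndepSet s) (hsc : (A.glue B ⊤).graph.IsIndepSet sᶜ) {a : A.V}
    (ha : Sum.inl a ∈ s) (hB : Nonempty B.V) : s = Set.range Sum.inl := by
  have hr (b : B.V) : Sum.inr b ∉ s := fun hb ↦ hs ha hb Sum.inl_ne_inr trivial
  obtain ⟨b⟩ := hB
  have hl (a' : A.V) : Sum.inl a' ∈ s := by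
    by_contra ha'
    exact hsc ha' (hr b) Sum.inl_ne_inr trivial
  ext (a' | b')
  · exact iff_of_true (hl a') ⟨a', rfl⟩
  · exact iff_of_false (hr b') fun ⟨_, h⟩ ↦ Sum.inl_ne_inr h

namespace GProp

lemma mem_and_mem_of_eq_range_inl {P Q : GProp} (hP : IsGProp P) (hQ : IsGProp Q) {A B : FGraph}
    (hA : Nonempty A.V) (hB : Nonempty B.V) {R : A.V → B.V → Prop} {s : Set (A.glue B R).V}
    (hs : s.Nonempty → P ((A.glue B R).induce s))
    (hsc : (sᶜ : Set _).Nonempty → Q ((A.glue B R).induce sᶜ)) (h : s = Set.range Sum.inl) :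
    P A ∧ Q B := by
  subst h
  obtain ⟨b⟩ := hB
  exact ⟨(hP.iff_of_iso FGraph.glue_induce_range_inl_iso).1 (hs (Set.range_nonempty _)),
    (hQ.iff_of_iso FGraph.glue_induce_compl_range_inl_iso).1
      (hsc ⟨.inr b, fun ⟨_, h⟩ ↦ Sum.inl_ne_inr h⟩)⟩

lemma mem_or_mem_of_prod_glue_top {X Y : GProp} (gX : IsGProp X) (gY : IsGProp Y)
    (eX : X.IsEdgeless) (eY : Y.IsEdgeless) {A B : FGraph} (hA : Nonempty A.V) (hB : Nonempty B.V)
    (h : X.prod Y (A.glue B ⊤)) : (X A ∧ Y B) ∨ (Y A ∧ X B) := by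
  obtain ⟨-, s, hs, hsc⟩ := h
  have is := eX.isIndepSet hs
  have isc := eY.isIndepSet hsc
  obtain ⟨a⟩ := id hA
  by_cases ha : Sum.inl a ∈ s
  · exact .inl (mem_and_mem_of_eq_range_inl gX gY hA hB hs hsc
      (FGraph.eq_range_inl_of_isIndepSet is isc ha hB))
  · rw [← compl_compl s] at is hs
    exact .inr (mem_and_mem_of_eq_range_inl gY gX hA hB hsc hs
      (FGraph.eq_range_inl_of_isIndepSet isc is ha hB))

lemma eq_and_eq_or_of_isEdgeless {X Y Q₁ Q₂ : GProp} (gX : IsGProp X) (gY : IsGProp Y)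
    (eX : X.IsEdgeless) (eY : Y.IsEdgeless) (g₁ : IsGProp Q₁) (g₂ : IsGProp Q₂)
    (h : X.prod Y = Q₁.prod Q₂) : (Q₁ = X ∧ Q₂ = Y) ∨ (Q₁ = Y ∧ Q₂ = X) := by
  have e₁ : Q₁.IsEdgeless := isEdgeless_of_prod_le eX eY g₁ g₂ h.ge
  have e₂ : Q₂.IsEdgeless := isEdgeless_of_prod_le eX eY g₂ g₁ (prod_comm Q₁ Q₂ ▸ h.ge)
  have hsub {P Q P' Q' : GProp} (gP : IsGProp P) (gQ : IsGProp Q) (gP' : IsGProp P')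
      (gQ' : IsGProp Q') (eP' : P'.IsEdgeless) (eQ' : Q'.IsEdgeless) (h : P.prod Q = P'.prod Q')
      (A B : FGraph) (hAB : (P A ∧ Q B) ∨ (Q A ∧ P B)) : (P' A ∧ Q' B) ∨ (Q' A ∧ P' B) := by
    have hAB' : P'.prod Q' (A.glue B ⊤) := by
      rw [← h]
      rcases hAB with ⟨hA, hB⟩ | ⟨hA, hB⟩
      · exact prod_glue gP gQ hA hB ⊤
      · exact prod_comm Q P ▸ prod_glue gQ gP hA hB ⊤
    have hne : Nonempty A.V ∧ Nonempty B.V := hAB.elim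
      (fun h ↦ ⟨gP.vertexNonempty A h.1, gQ.vertexNonempty B h.2⟩)
      fun h ↦ ⟨gQ.vertexNonempty A h.1, gP.vertexNonempty B h.2⟩
    exact mem_or_mem_of_prod_glue_top gP' gQ' eP' eQ' hne.1 hne.2 hAB'
  exact eq_and_eq_or_eq_and_eq_of_forall_and_or_and_iff g₁.nonempty g₂.nonempty gX.nonempty
    gY.nonempty fun A B ↦ ⟨hsub g₁ g₂ gX gY eX eY h.symm A B, hsub gX gY g₁ g₂ e₁ e₂ h A B⟩

end GProp

namespace HasUniqueFactorisation

variable {X Y : GProp}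

lemma of_isEdgeless (gX : IsGProp X) (gY : IsGProp Y) (eX : X.IsEdgeless) (eY : Y.IsEdgeless) :
    HasUniqueFactorisation (X.prod Y) :=
  of_forall fun _ _ ↦ eq_and_eq_or_of_isEdgeless gX gY eX eY

lemma of_isComplete (gX : IsGProp X) (gY : IsGProp Y) (cX : X.IsComplete) (cY : Y.IsComplete) :
    HasUniqueFactorisation (X.prod Y) := by
  rw [← co_co (X.prod Y), co_prod]
  exact (of_isEdgeless gX.co gY.co (isEdgeless_co.2 cX) (isEdgeless_co.2 cY)).co

end HasUniqueFactorisation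

lemma eq_bot_or_eq_top_of_adj_trans {V : Type*} {G : SimpleGraph V}
    (h : ∀ ⦃x y z⦄, G.Adj x y → G.Adj y z → x ≠ z → G.Adj x z)
    (h' : ∀ ⦃x y z⦄, Gᶜ.Adj x y → Gᶜ.Adj y z → x ≠ z → Gᶜ.Adj x z) : G = ⊥ ∨ G = ⊤ := by
  rcases eq_or_ne G ⊥ with hG | hG
  · exact .inl hG
  obtain ⟨a, b, hab⟩ := SimpleGraph.ne_bot_iff_exists_adj.1 hG
  have ha {c : V} (hc : c ≠ a) : G.Adj a c := by
    by_contra hac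
    have hcb : c ≠ b := fun e ↦ hac (e ▸ hab)
    have hcb' : ¬ G.Adj c b := fun hcb' ↦ hac (h hab hcb'.symm hc.symm)
    have hab' : Gᶜ.Adj a b := h' ⟨hc.symm, hac⟩ ⟨hcb, hcb'⟩ hab.ne
    exact hab'.2 hab
  refine .inr (SimpleGraph.eq_top_iff_forall_ne_adj.2 fun c d hcd ↦ ?_)
  rcases eq_or_ne c a with rfl | hc
  · exact ha hcd.symm
  rcases eq_or_ne d a with rfl | hd
  · exact (ha hc).symm
  · exact h (ha hc).symm (ha hd) hcd

namespace GProp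

lemma isSplit_of_prod {X Y : GProp} (eX : X.IsEdgeless) (cY : Y.IsComplete) {G : FGraph}
    (h : X.prod Y G) : G.IsSplit :=
  let ⟨_, s, hs, hsc⟩ := h
  ⟨s, eX.isIndepSet hs, cY.isClique hsc⟩

lemma isSplit_of_co_prod_co {Q₁ Q₂ : GProp} (h : ∀ G, Q₁.prod Q₂ G → G.IsSplit) (G : FGraph)
    (hG : Q₁.co.prod Q₂.co G) : G.IsSplit := by
  rw [← co_prod] at hG
  exact G.compl_compl ▸ (h G.compl hG).compl

lemma isComplete_or_isComplete_of_isSplit {Q₁ Q₂ : GProp} (g₁ : IsGProp Q₁) (g₂ : IsGProp Q₂)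
    (h : ∀ G, Q₁.prod Q₂ G → G.IsSplit) : Q₁.IsComplete ∨ Q₂.IsComplete := by
  by_contra! ⟨h₁, h₂⟩
  simp only [IsComplete, not_forall, SimpleGraph.eq_top_iff_forall_ne_adj] at h₁ h₂
  obtain ⟨A, hA, a, a', ha, haa'⟩ := h₁
  obtain ⟨B, hB, b, b', hb, hbb'⟩ := h₂
  have hchord := (h _ (prod_glue g₁ g₂ hA hB ⊤)).exists_chord
    (a := .inl a) (b := .inr b) (c := .inl a') (d := .inr b') (Sum.inl_injective.ne ha)
    (Sum.inr_injective.ne hb) trivial trivial trivial trivial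
  exact hchord.elim haa' hbb'

lemma isEdgeless_or_isEdgeless_of_isSplit {Q₁ Q₂ : GProp} (g₁ : IsGProp Q₁) (g₂ : IsGProp Q₂)
    (h : ∀ G, Q₁.prod Q₂ G → G.IsSplit) : Q₁.IsEdgeless ∨ Q₂.IsEdgeless :=
  (isComplete_or_isComplete_of_isSplit g₁.co g₂.co (isSplit_of_co_prod_co h)).imp
    isComplete_co.1 isComplete_co.1

lemma adj_trans_of_isSplit {Q₁ Q₂ : GProp} (g₁ : IsGProp Q₁) (g₂ : IsGProp Q₂)
    (h : ∀ G, Q₁.prod Q₂ G → G.IsSplit) {A : FGraph} (hA : Q₁ A) ⦃x y z : A.V⦄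
    (hxy : A.graph.Adj x y) (hyz : A.graph.Adj y z) (hxz : x ≠ z) : A.graph.Adj x z := by
  obtain ⟨B, hB⟩ := g₂.nonempty
  obtain ⟨b⟩ := g₂.vertexNonempty B hB
  -- A vertex `b` joined to every vertex of `A` except `y` closes the path `x y z` to a 4-cycle.
  have hchord := (h _ (prod_glue g₁ g₂ hA hB fun u _ ↦ u ≠ y)).exists_chord
    (a := .inl x) (b := .inl y) (c := .inl z) (d := .inr b) (Sum.inl_injective.ne hxz)
    Sum.inl_ne_inr hxy hyz hyz.ne' hxy.ne
  exact hchord.resolve_right fun hyy ↦ hyy rfl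

lemma eq_bot_or_eq_top_of_isSplit {Q₁ Q₂ : GProp} (g₁ : IsGProp Q₁) (g₂ : IsGProp Q₂)
    (h : ∀ G, Q₁.prod Q₂ G → G.IsSplit) (A : FGraph) (hA : Q₁ A) :
    A.graph = ⊥ ∨ A.graph = ⊤ :=
  eq_bot_or_eq_top_of_adj_trans (adj_trans_of_isSplit g₁ g₂ h hA)
    (adj_trans_of_isSplit (A := A.compl) g₁.co g₂.co (isSplit_of_co_prod_co h)
      (by rwa [co, A.compl_compl]))

lemma isIndepSet_or_isClique {Q : GProp} (h : ∀ A, Q A → A.graph = ⊥ ∨ A.graph = ⊤)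
    {G : FGraph} {s : Set G.V} (hs : s.Nonempty → Q (G.induce s)) :
    G.graph.IsIndepSet s ∨ G.graph.IsClique s := by
  rcases s.eq_empty_or_nonempty with rfl | hne
  · exact .inl (Set.pairwise_empty _)
  · exact (h _ (hs hne)).imp FGraph.induce_graph_eq_bot_iff.1 FGraph.induce_graph_eq_top_iff.1

lemma prod_Oprop_Kprop_of_isIndepSet_of_isClique {r s : ℕ∞} {G : FGraph} [Nonempty G.V]
    {t : Set G.V} (hi : G.graph.IsIndepSet t) (hc : G.graph.IsClique tᶜ) (hr : t.ncard ≤ r)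
    (hs : tᶜ.ncard ≤ s) : (Oprop r).prod (Kprop s) G :=
  ⟨‹_›, t,
    fun hne ↦ ⟨hne.to_subtype, FGraph.induce_graph_eq_bot_iff.2 hi, by rwa [FGraph.card_induce]⟩,
    fun hne ↦ ⟨hne.to_subtype, FGraph.induce_graph_eq_top_iff.2 hc, by rwa [FGraph.card_induce]⟩⟩

lemma prod_Oprop_Kprop_pathGraph {r s : ℕ∞} (hr : 2 ≤ r) (hs : 2 ≤ s) :
    (Oprop r).prod (Kprop s) ⟨Fin 4, SimpleGraph.pathGraph 4⟩ := by
  have hcompl : ({0, 3} : Set (Fin 4))ᶜ = {1, 2} := by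
    ext i
    fin_cases i <;> simp
  have : Nonempty (FGraph.mk (Fin 4) (SimpleGraph.pathGraph 4)).V := ⟨(0 : Fin 4)⟩
  refine prod_Oprop_Kprop_of_isIndepSet_of_isClique (t := ({0, 3} : Set (Fin 4))) ?_ ?_ ?_ ?_
  · simp [SimpleGraph.IsIndepSet, Set.pairwise_insert, SimpleGraph.pathGraph_adj]
  · simp [hcompl, SimpleGraph.pathGraph_adj]
  · simpa using hr
  · simpa [hcompl] using hs

lemma not_isEdgeless_and_isComplete {r s : ℕ∞} (hr : 2 ≤ r) (hs : 2 ≤ s) {Q₁ Q₂ : GProp}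
    (g₁ : IsGProp Q₁) (g₂ : IsGProp Q₂) (h : (Oprop r).prod (Kprop s) = Q₁.prod Q₂) :
    ¬ (Q₁.IsEdgeless ∧ Q₁.IsComplete) := by
  rintro ⟨e₁, c₁⟩
  -- Deleting at most one vertex from the path on four vertices leaves both an edge and a non-edge.
  obtain ⟨-, t, ht, htc⟩ := h.le _ (prod_Oprop_Kprop_pathGraph hr hs)
  change Set (Fin 4) at t
  have hsub {i j : Fin 4} (hi : i ∈ t) (hj : j ∈ t) : i = j := by
    by_contra hij
    exact e₁.isIndepSet ht hi hj hij (c₁.isClique ht hi hj hij)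
  have hsplit (G : FGraph) (hG : Q₂.prod Q₁ G) : G.IsSplit :=
    isSplit_of_prod (isEdgeless_Oprop r) (isComplete_Kprop s) (h.ge G (prod_comm Q₂ Q₁ ▸ hG))
  have h₂ := isIndepSet_or_isClique (eq_bot_or_eq_top_of_isSplit g₂ g₁ hsplit) htc
  have hpair {i j k l : Fin 4} (h : i ≠ k ∧ i ≠ l ∧ j ≠ k ∧ j ≠ l) :
      (i ∉ t ∧ j ∉ t) ∨ (k ∉ t ∧ l ∉ t) := by
    by_contra! hcon
    have hij : i ∈ t ∨ j ∈ t := or_iff_not_imp_left.2 fun hi ↦ hcon.1 hi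
    have hkl : k ∈ t ∨ l ∈ t := or_iff_not_imp_left.2 fun hk ↦ hcon.2 hk
    rcases hij with hi | hi <;> rcases hkl with hk | hk <;> simp [hsub hi hk] at h
  rcases h₂ with hi | hc
  · rcases hpair (i := 0) (j := 1) (k := 2) (l := 3) (by decide) with ⟨h₀, h₁⟩ | ⟨h₀, h₁⟩
    · exact hi h₀ h₁ (by decide) (by simp [SimpleGraph.pathGraph_adj])
    · exact hi h₀ h₁ (by decide) (by simp [SimpleGraph.pathGraph_adj])
  · rcases hpair (i := 0) (j := 2) (k := 1) (l := 3) (by decide) with ⟨h₀, h₁⟩ | ⟨h₀, h₁⟩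
    · simpa [SimpleGraph.pathGraph_adj] using hc h₀ h₁ (by decide)
    · simpa [SimpleGraph.pathGraph_adj] using hc h₀ h₁ (by decide)

end GProp

lemma ncard_le_ncard_add_one_of_isIndepSet_of_isClique_compl {V : Type*} [Finite V]
    {G : SimpleGraph V} {s t : Set V} (ht : G.IsIndepSet t) (hs : G.IsClique sᶜ) :
    t.ncard ≤ s.ncard + 1 := by
  have hsub : (t \ s).Subsingleton := fun u hu v hv ↦ by
    by_contra huv
    exact ht hu.1 hv.1 huv (hs hu.2 hv.2 huv)
  rw [← Set.ncard_inter_add_ncard_sdiff_eq_ncard t s]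
  exact add_le_add (Set.ncard_le_ncard Set.inter_subset_right)
    (Set.ncard_le_one_iff_subsingleton.2 hsub)

namespace FGraph

lemma iso_of_eq_bot {G H : FGraph} (hG : G.graph = ⊥) (hH : H.graph = ⊥)
    (h : Fintype.card G.V = Fintype.card H.V) : G.Iso H :=
  ⟨⟨Fintype.equivOfCardEq h, by simp [hG, hH]⟩⟩

variable {A B : FGraph}

lemma card_le_ncard_of_isClique_compl (hA : A.graph = ⊥) (hB : Nonempty B.V)
    {s : Set (A.glue B ⊥).V} (hs : (A.glue B ⊥).graph.IsClique sᶜ) :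
    Fintype.card A.V ≤ s.ncard := by
  obtain ⟨b⟩ := hB
  let t : Set (A.glue B ⊥).V := insert (.inr b) (Set.range .inl)
  have ht : (A.glue B ⊥).graph.IsIndepSet t := by
    rintro _ (rfl | ⟨a, rfl⟩) _ (rfl | ⟨a', rfl⟩) hne
    exacts [(hne rfl).elim, not_false, not_false, SimpleGraph.eq_bot_iff_forall_not_adj.1 hA a a']
  have htcard : t.ncard = Fintype.card A.V + 1 := by
    rw [← Nat.card_eq_fintype_card, ← Set.ncard_range_of_injective Sum.inl_injective]
    exact Set.ncard_insert_of_notMem fun ⟨_, h⟩ ↦ Sum.inl_ne_inr h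
  have := ncard_le_ncard_add_one_of_isIndepSet_of_isClique_compl ht hs
  omega

lemma ncard_le_card_of_isIndepSet (hA : Nonempty A.V) (hB : B.graph = ⊤)
    {t : Set (A.glue B ⊤).V} (ht : (A.glue B ⊤).graph.IsIndepSet t) :
    t.ncard ≤ Fintype.card A.V := by
  obtain ⟨a⟩ := hA
  let s : Set (A.glue B ⊤).V := Sum.inl '' {a}ᶜ
  have hs : (A.glue B ⊤).graph.IsClique sᶜ := by
    have ha {a' : A.V} (h : Sum.inl a' ∈ sᶜ) : a' = a := by_contra fun hne ↦ h ⟨a', hne, rfl⟩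
    rintro (a₁ | b₁) h₁ (a₂ | b₂) h₂ hne
    · exact absurd ((ha h₁).trans (ha h₂).symm) (ne_of_apply_ne _ hne)
    · trivial
    · trivial
    · exact SimpleGraph.eq_top_iff_forall_ne_adj.1 hB _ _ (ne_of_apply_ne _ hne)
  have hscard : s.ncard + 1 = Fintype.card A.V := by
    have himage : s.ncard = ({a}ᶜ : Set A.V).ncard :=
      Set.ncard_image_of_injective _ Sum.inl_injective
    rw [himage, ← Set.ncard_singleton a, add_comm, Set.ncard_add_ncard_compl,
      Nat.card_eq_fintype_card]
  exact hscard ▸ ncard_le_ncard_add_one_of_isIndepSet_of_isClique_compl ht hs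

end FGraph

namespace GProp

lemma isEdgeless_and_isComplete_or {r s : ℕ∞} (hr : 2 ≤ r) (hs : 2 ≤ s) {Q₁ Q₂ : GProp}
    (g₁ : IsGProp Q₁) (g₂ : IsGProp Q₂) (h : (Oprop r).prod (Kprop s) = Q₁.prod Q₂) :
    (Q₁.IsEdgeless ∧ Q₂.IsComplete) ∨ (Q₂.IsEdgeless ∧ Q₁.IsComplete) := by
  have hsplit (G : FGraph) (hG : Q₁.prod Q₂ G) : G.IsSplit :=
    isSplit_of_prod (isEdgeless_Oprop r) (isComplete_Kprop s) (h.ge G hG)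
  have h₁ := not_isEdgeless_and_isComplete hr hs g₁ g₂ h
  have h₂ := not_isEdgeless_and_isComplete hr hs g₂ g₁ (h.trans (prod_comm Q₁ Q₂))
  have he := isEdgeless_or_isEdgeless_of_isSplit g₁ g₂ hsplit
  have hc := isComplete_or_isComplete_of_isSplit g₁ g₂ hsplit
  tauto

lemma le_Oprop_of_prod_le {r : ℕ∞} {Y Q₁ Q₂ : GProp} (e₁ : Q₁.IsEdgeless) (g₁ : IsGProp Q₁)
    (g₂ : IsGProp Q₂) (cY : Y.IsComplete) (h : Q₁.prod Q₂ ≤ (Oprop r).prod Y) :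
    Q₁ ≤ Oprop r := by
  intro A hA
  obtain ⟨B, hB⟩ := g₂.nonempty
  have hA' := g₁.vertexNonempty A hA
  have hB' := g₂.vertexNonempty B hB
  obtain ⟨-, s, hs, hsc⟩ := h _ (prod_glue g₁ g₂ hA hB ⊥)
  have hcard : Fintype.card A.V ≤ s.ncard :=
    FGraph.card_le_ncard_of_isClique_compl (e₁ A hA) hB' (cY.isClique hsc)
  have hne : s.Nonempty := Set.nonempty_of_ncard_ne_zero (Fintype.card_pos.trans_le hcard).ne'
  refine ⟨hA', e₁ A hA, le_trans ?_ (hs hne).2.2⟩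
  rw [FGraph.card_induce]
  exact_mod_cast hcard

lemma Oprop_le_of_le_prod {r s : ℕ} (hr : 1 ≤ r) (hs : 1 ≤ s) {Q₁ Q₂ : GProp} (g₁ : IsGProp Q₁)
    (e₁ : Q₁.IsEdgeless) (h₂ : Q₂ ≤ Kprop s) (h : (Oprop r).prod (Kprop s) ≤ Q₁.prod Q₂) :
    Oprop r ≤ Q₁ := by
  intro A hA
  let B : FGraph := ⟨Fin s, ⊤⟩
  have hB : Kprop s B := ⟨⟨⟨0, hs⟩⟩, rfl, by simp [B]⟩
  have gO : IsGProp (Oprop r) := isGProp_Oprop (by exact_mod_cast hr)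
  have gK : IsGProp (Kprop s) := isGProp_Kprop (by exact_mod_cast hs)
  obtain ⟨-, t, ht, htc⟩ := h _ (prod_glue gO gK hA hB ⊤)
  have hle : t.ncard ≤ Fintype.card A.V :=
    FGraph.ncard_le_card_of_isIndepSet hA.1 rfl (e₁.isIndepSet ht)
  have hlec : tᶜ.ncard ≤ s := by
    rcases (tᶜ : Set _).eq_empty_or_nonempty with hempty | hne
    · simp [hempty]
    · exact FGraph.card_induce _ tᶜ ▸ Nat.cast_le.1 (h₂ _ (htc hne)).2.2
  have hadd : t.ncard + tᶜ.ncard = Fintype.card A.V + s := by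
    rw [Set.ncard_add_ncard_compl, Nat.card_eq_fintype_card]
    exact Fintype.card_sum.trans (by simp [B])
  have hcard : t.ncard = Fintype.card A.V := by omega
  have hAcard := Fintype.card_pos_iff.2 hA.1
  have htne : t.Nonempty := Set.nonempty_of_ncard_ne_zero (by omega)
  exact g₁.isoClosed _ A
    (FGraph.iso_of_eq_bot (e₁ _ (ht htne)) hA.2.1 ((FGraph.card_induce _ t).trans hcard)) (ht htne)

lemma eq_Oprop_and_eq_Kprop {r s : ℕ} (hr : 1 ≤ r) (hs : 1 ≤ s) {Q₁ Q₂ : GProp} (g₁ : IsGProp Q₁)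
    (g₂ : IsGProp Q₂) (e₁ : Q₁.IsEdgeless) (c₂ : Q₂.IsComplete)
    (h : (Oprop r).prod (Kprop s) = Q₁.prod Q₂) : Q₁ = Oprop r ∧ Q₂ = Kprop s := by
  have hco : (Oprop s).prod (Kprop r) = Q₂.co.prod Q₁.co := by
    rw [← co_prod, prod_comm Q₂, ← h, co_prod, co_Oprop, co_Kprop, prod_comm]
  have e₂ : Q₂.co.IsEdgeless := isEdgeless_co.2 c₂
  have h₁ : Q₁ ≤ Oprop r := le_Oprop_of_prod_le e₁ g₁ g₂ (isComplete_Kprop s) h.ge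
  have h₂ : Q₂.co ≤ Oprop s := le_Oprop_of_prod_le e₂ g₂.co g₁.co (isComplete_Kprop r) hco.ge
  have h₁' : Q₁.co ≤ Kprop r := co_Oprop r ▸ co_mono h₁
  have h₂' : Q₂ ≤ Kprop s := co_Oprop s ▸ co_co Q₂ ▸ co_mono h₂
  refine ⟨h₁.antisymm (Oprop_le_of_le_prod hr hs g₁ e₁ h₂' h.le), co_injective ?_⟩
  rw [co_Kprop]
  exact h₂.antisymm (Oprop_le_of_le_prod hs hr g₂.co e₂ h₁' hco.le)

end GProp

lemma HasUniqueFactorisation.prod_Oprop_Kprop {r s : ℕ} (hr : 1 ≤ r) (hs : 1 ≤ s) :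
    HasUniqueFactorisation ((Oprop r).prod (Kprop s)) := by
  have gO : IsGProp (Oprop r) := isGProp_Oprop (by exact_mod_cast hr)
  have gK : IsGProp (Kprop s) := isGProp_Kprop (by exact_mod_cast hs)
  rcases hr.eq_or_lt with rfl | hr'
  · rw [Nat.cast_one, Oprop_one_eq_Kprop_one] at gO ⊢
    exact of_isComplete gO gK (isComplete_Kprop 1) (isComplete_Kprop s)
  rcases hs.eq_or_lt with rfl | hs'
  · rw [Nat.cast_one, ← Oprop_one_eq_Kprop_one] at gK ⊢
    exact of_isEdgeless gO gK (isEdgeless_Oprop r) (isEdgeless_Oprop 1)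
  refine of_forall (A := Oprop r) (B := Kprop s) fun Q₁ Q₂ g₁ g₂ h ↦ ?_
  rcases isEdgeless_and_isComplete_or (by exact_mod_cast hr') (by exact_mod_cast hs') g₁ g₂ h with
    ⟨e₁, c₂⟩ | ⟨e₂, c₁⟩
  · exact .inl (eq_Oprop_and_eq_Kprop hr hs g₁ g₂ e₁ c₂ h)
  · exact .inr (eq_Oprop_and_eq_Kprop hr hs g₂ g₁ e₂ c₁ (h.trans (prod_comm Q₁ Q₂))).symm

/-- an induced-hereditary graph property `P` has a unique
factorisation iff `P` is irreducible, or `P = O(r) ∘ O(s)` with `1 ≤ r,s ≤ ∞`,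
or `P = K(r) ∘ K(s)` with `1 ≤ r,s ≤ ∞`, or `P = O(r) ∘ K(s)` with
`r, s` finite, `≥ 1`. -/
theorem statement_3 (P : GProp) (hP : IsGProp P) (hind : IndHereditary P) :
    HasUniqueFactorisation P ↔
      (IrreducibleProp P ∨
       (∃ r s : ℕ∞, 1 ≤ r ∧ 1 ≤ s ∧ P = GProp.prod (Oprop r) (Oprop s)) ∨
       (∃ r s : ℕ∞, 1 ≤ r ∧ 1 ≤ s ∧ P = GProp.prod (Kprop r) (Kprop s)) ∨
       (∃ r s : ℕ, 1 ≤ r ∧ 1 ≤ s ∧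
          P = GProp.prod (Oprop (r : ℕ∞)) (Kprop (s : ℕ∞)))) := by
  constructor
  · intro h
    by_cases hirr : IrreducibleProp P
    · exact .inl hirr
    · exact .inr (h.cases_of_reducible hP hind hirr)
  · rintro (h | ⟨r, s, hr, hs, rfl⟩ | ⟨r, s, hr, hs, rfl⟩ | ⟨r, s, hr, hs, rfl⟩)
    · exact .of_irreducible h
    · exact .of_isEdgeless (isGProp_Oprop hr) (isGProp_Oprop hs) (isEdgeless_Oprop r)
        (isEdgeless_Oprop s)
    · exact .of_isComplete (isGProp_Kprop hr) (isGProp_Kprop hs) (isComplete_Kprop r)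
        (isComplete_Kprop s)
    · exact .prod_Oprop_Kprop hr hs
end

section
/- Let P be a hereditary compositive graph property not containing all graphs, and let d = dc(P). Then there exist hereditary compositive properties P₁,…,P_d, each indecomposable (dc(Pᵢ) = 1), such that P = P₁∘⋯∘P_d. Moreover, if P is additive, then the Pᵢ can be chosen to be additive as well. -/
attribute [local instance] Classical.propDecidable

open SimpleGraph

/-- `P` is hereditary compositive: hereditary, and any two members of `P` are
both subgraphs of some member of `P`. -/
def HerCompositive (P : GProp) : Prop :=
  Hereditary P ∧ ∀ G H, P G → P H → ∃ K, P K ∧ G.IsSub K ∧ H.IsSub K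

/-- The disjoint union of two bundled finite graphs. -/
def FGraph.disjUnion (G H : FGraph) : FGraph := ⟨G.V ⊕ H.V, G.graph ⊕g H.graph⟩

/-- `P` is additive: closed under (finite) disjoint unions. -/
def AdditiveProp (P : GProp) : Prop := ∀ G H, P G → P H → P (G.disjUnion H)

/-- `H + e`: the graph obtained from `H` by adding the edge `{a, b}`. -/
def addEdge (H : FGraph) (a b : H.V) : FGraph :=
  ⟨H.V, H.graph ⊔ SimpleGraph.fromEdgeSet {s(a, b)}⟩

/-- `G` is `P`-maximal: `G ∈ P` but adding any edge of the complement of `G`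
leaves `P`. -/
def PMaximal (P : GProp) (G : FGraph) : Prop :=
  P G ∧ ∀ a b : G.V, a ≠ b → ¬ G.graph.Adj a b → ¬ P (addEdge G a b)

/-- `c(P)`: the largest `r` such that the complete graph `K_r` belongs to `P`. -/
noncomputable def cNum (P : GProp) : ℕ :=
  sSup {r : ℕ | P ⟨Fin r, (⊤ : SimpleGraph (Fin r))⟩}

/-- `G ∈ M*(P)`: `G` is `P`-maximal with at least `c(P)` vertices. -/
def PMaxStar (P : GProp) (G : FGraph) : Prop :=
  PMaximal P G ∧ cNum P ≤ Fintype.card G.V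

/-- `dc(G)`: the number of ind-parts of `G`, i.e. the number of connected
components of the complement of `G`. -/
noncomputable def dc (G : FGraph) : ℕ := Fintype.card (G.graphᶜ.ConnectedComponent)

/-- `dc(P) = min {dc(G) : G ∈ M*(P)}`; `P` is indecomposable if `dc(P) = 1`. -/
noncomputable def dcP (P : GProp) : ℕ := sInf {n : ℕ | ∃ G, PMaxStar P G ∧ dc G = n}

/-!
Fix a `P`-maximal graph `H` on at least `c(P)` vertices with the fewest ind-parts, `d = dc(P)`, and
embed it into another `P`-maximal graph `H'`. If some ind-part of `H'` missed the copy of `H`, a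
vertex of it would be joined to the whole copy; putting it in place of an end of a missing edge of
`H` gives a copy of `H + e` in `P`, and if `H` is complete it gives a complete graph on `c(P) + 1`
vertices. Hence every ind-part of `H'` is met, and by minimality of `d` the ind-parts of `H` and
`H'` correspond bijectively. So there is an increasing chain of maximal graphs with ind-parts
consistently labelled by `1, …, d` which exhausts `P`, and `Pᵢ` is generated by the `i`-th parts of
the chain. If `P` is additive, enough disjoint copies of a member of the chain lie in a common
maximal graph, and by the pigeonhole principle two of them induce the same labelling there, which
makes each `Pᵢ` additive.
-/

namespace FGraph

variable {G' H' G H K : FGraph}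

/-- The complete graph `K_n`. -/
abbrev complete (n : ℕ) : FGraph := ⟨Fin n, ⊤⟩

lemma IsSub.refl (G : FGraph) : G.IsSub G := ⟨Hom.id, Function.injective_id⟩

lemma IsSub.trans : G.IsSub H → H.IsSub K → G.IsSub K :=
  fun ⟨f, hf⟩ ⟨g, hg⟩ => ⟨g.comp f, hg.comp hf⟩

lemma Iso.isSub : G.Iso H → G.IsSub H := fun ⟨e⟩ => ⟨e.toHom, e.injective⟩

lemma IsSub.nonempty (h : G.IsSub H) (hG : Nonempty G.V) : Nonempty H.V := hG.map h.choose

lemma IsSub.disjUnion :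
    G.IsSub G' → H.IsSub H' → (G.disjUnion H).IsSub (G'.disjUnion H') :=
  fun ⟨f, hf⟩ ⟨g, hg⟩ => ⟨Hom.sum f g, hf.sumMap hg⟩

lemma disjUnion_isSub (f : G.graph →g K.graph) (g : H.graph →g K.graph)
    (hf : Function.Injective f) (hg : Function.Injective g) (hfg : ∀ u v, f u ≠ g v) :
    (G.disjUnion H).IsSub K := by
  refine ⟨⟨Sum.elim f g, ?_⟩, hf.sumElim hg hfg⟩
  rintro (u | u) (v | v) h
  · exact f.map_adj (sum_adj_inl.1 h)
  · simp [FGraph.disjUnion] at h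
  · simp [FGraph.disjUnion] at h
  · exact g.map_adj (sum_adj_inr.1 h)

lemma induce_isSub_induce (f : G.graph →g H.graph) (hf : Function.Injective f)
    {s : Set G.V} {t : Set H.V} (h : Set.MapsTo f s t) : (G.induce s).IsSub (H.induce t) :=
  ⟨induceHom f h, induceHom_injective f h hf.injOn⟩

lemma induce_addEdge_of_mem (G : FGraph) {s : Set G.V} {a b : G.V} (ha : a ∈ s) (hb : b ∈ s) :
    (addEdge G a b).induce s = addEdge (G.induce s) ⟨a, ha⟩ ⟨b, hb⟩ := by
  have h : (G.graph ⊔ fromEdgeSet {s(a, b)}).induce s =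
      G.graph.induce s ⊔ fromEdgeSet {s(⟨a, ha⟩, ⟨b, hb⟩)} := by
    ext u v
    simp [Subtype.ext_iff]
  exact congrArg (fun g => (⟨↥s, g⟩ : FGraph)) h

lemma induce_addEdge_of_notMem (G : FGraph) {s : Set G.V} {a : G.V} (ha : a ∉ s) (b : G.V) :
    (addEdge G a b).induce s = G.induce s := by
  have h : (G.graph ⊔ fromEdgeSet {s(a, b)}).induce s = G.graph.induce s := by
    ext u v
    have hu : u.1 ≠ a := fun h => ha (h ▸ u.2)
    have hv : v.1 ≠ a := fun h => ha (h ▸ v.2)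
    simp [hu, hv]
  exact congrArg (fun g => (⟨↥s, g⟩ : FGraph)) h

lemma addEdge_isSub_of_forall_adj (f : H.graph →g K.graph) (hf : Function.Injective f)
    {x : K.V} (hx : ∀ v, K.graph.Adj x (f v)) (a b : H.V) : (addEdge H a b).IsSub K := by
  -- In the copy of `H`, move the image of `a` to `x`.
  have hadj : ∀ u v, (H.graph ⊔ fromEdgeSet {s(a, b)}).Adj u v →
      K.graph.Adj (Function.update f a x u) (Function.update f a x v) := by
    intro u v huv
    by_cases hu : u = a <;> by_cases hv : v = a
    · exact absurd (hu.trans hv.symm) huv.ne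
    · simpa [hu, Function.update_of_ne hv] using hx v
    · simpa [hv, Function.update_of_ne hu] using (hx u).symm
    · rw [Function.update_of_ne hu, Function.update_of_ne hv]
      refine f.map_adj ?_
      simpa [hu, hv] using huv
  have hinj : Function.Injective (Function.update f a x) := by
    intro u v huv
    have hne : ∀ w, x ≠ f w := fun w => (hx w).ne
    simp only [Function.update_apply] at huv
    grind [hf.eq_iff]
  exact ⟨⟨Function.update f a x, hadj _ _⟩, hinj⟩

end FGraph

open FGraph

namespace GProp

variable {κ : Type*} {X : κ → FGraph}

/-- The hereditary property generated by a family of graphs: all graphs with at least one vertex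
which are subgraphs of some member of the family. -/
def generated (X : κ → FGraph) : GProp := fun G => Nonempty G.V ∧ ∃ n, G.IsSub (X n)

lemma hereditary_generated (X : κ → FGraph) : Hereditary (generated X) :=
  fun _ _ ⟨_, n, hn⟩ hHG hH => ⟨hH, n, hHG.trans hn⟩

lemma isGProp_generated (hX : ∃ n, Nonempty (X n).V) : IsGProp (generated X) where
  nonempty := hX.elim fun n hn => ⟨X n, hn, n, IsSub.refl _⟩
  vertexNonempty _ hG := hG.1
  isoClosed G H := fun ⟨e⟩ hG =>
    hereditary_generated X G H hG (Iso.isSub ⟨e.symm⟩) (hG.1.map e)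

lemma herCompositive_generated (hX : Directed IsSub X) : HerCompositive (generated X) := by
  refine ⟨hereditary_generated X, ?_⟩
  rintro G H ⟨hG, m, hm⟩ ⟨_, n, hn⟩
  obtain ⟨k, hmk, hnk⟩ := hX m n
  have hGk := hm.trans hmk
  exact ⟨X k, ⟨hGk.nonempty hG, k, IsSub.refl _⟩, hGk, hn.trans hnk⟩

lemma additiveProp_generated (hX : Directed IsSub X)
    (hdouble : ∀ n, ∃ k, ((X n).disjUnion (X n)).IsSub (X k)) : AdditiveProp (generated X) := by
  rintro G H ⟨hG, m, hm⟩ ⟨_, n, hn⟩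
  obtain ⟨k, hmk, hnk⟩ := hX m n
  obtain ⟨l, hl⟩ := hdouble k
  exact ⟨hG.map Sum.inl, l, ((hm.trans hmk).disjUnion (hn.trans hnk)).trans hl⟩

lemma eq_generated {P : GProp} (hP : IsGProp P) (hh : Hereditary P) (hX : ∀ n, P (X n))
    (hcof : ∀ G, P G → ∃ n, G.IsSub (X n)) : P = generated X :=
  funext fun G => propext
    ⟨fun hG => ⟨hP.vertexNonempty G hG, hcof G hG⟩, fun ⟨hG, n, hn⟩ => hh _ _ (hX n) hn hG⟩

end GProp

section CompleteGraphs

variable {P : GProp}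

lemma bddAbove_complete_mem (hh : Hereditary P)
    (hproper : ¬ ∀ G : FGraph, Nonempty G.V → P G) : BddAbove {r | P (complete r)} := by
  push Not at hproper
  obtain ⟨G, hG, hPG⟩ := hproper
  refine ⟨Fintype.card G.V, fun r hr => ?_⟩
  by_contra! hlt
  obtain ⟨e⟩ : Nonempty (G.V ↪ Fin r) :=
    Function.Embedding.nonempty_of_card_le (by simpa using hlt.le)
  exact hPG (hh _ _ hr ⟨⟨e, fun h => e.injective.ne h.ne⟩, e.injective⟩ hG)

lemma complete_mem_of_isNClique (hh : Hereditary P) {G : FGraph} (hG : P G) {n : ℕ} (hn : n ≠ 0)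
    {s : Finset G.V} (hs : G.graph.IsNClique n s) : P (complete n) :=
  let φ := topEmbeddingOfNotCliqueFree hs.not_cliqueFree
  hh _ _ hG ⟨φ.toHom, φ.injective⟩ (Fin.pos_iff_nonempty.1 (Nat.pos_of_ne_zero hn))

lemma isNClique_card_le_cNum (hh : Hereditary P)
    (hproper : ¬ ∀ G : FGraph, Nonempty G.V → P G) {G : FGraph} (hG : P G) {n : ℕ}
    {s : Finset G.V} (hs : G.graph.IsNClique n s) : n ≤ cNum P := by
  obtain rfl | hn := eq_or_ne n 0
  · exact Nat.zero_le _
  · exact le_csSup (bddAbove_complete_mem hh hproper) (complete_mem_of_isNClique hh hG hn hs)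

lemma complete_cNum_mem (hP : IsGProp P) (hh : Hereditary P)
    (hproper : ¬ ∀ G : FGraph, Nonempty G.V → P G) : P (complete (cNum P)) := by
  obtain ⟨G, hG⟩ := hP.nonempty
  obtain ⟨x⟩ := hP.vertexNonempty G hG
  have hone : P (complete 1) :=
    complete_mem_of_isNClique hh hG one_ne_zero (isNClique_singleton (a := x).2 rfl)
  exact Nat.sSup_mem ⟨1, hone⟩ (bddAbove_complete_mem hh hproper)

lemma exists_cNum_generated_le_card {κ : Type*} {X : κ → FGraph} (hX : ∃ n, Nonempty (X n).V)
    (hproper : ¬ ∀ G : FGraph, Nonempty G.V → GProp.generated X G) :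
    ∃ n, cNum (GProp.generated X) ≤ Fintype.card (X n).V := by
  obtain ⟨-, n, φ, hφ⟩ := complete_cNum_mem (GProp.isGProp_generated hX)
    (GProp.hereditary_generated X) hproper
  exact ⟨n, by simpa using Fintype.card_le_of_injective φ hφ⟩

end CompleteGraphs

section IndParts

variable {V W : Type*} {G : SimpleGraph V} {H : SimpleGraph W}

/-- The map sending each ind-part of `G`, encoded as a connected component of the complement, to the
ind-part of `H` that contains its image under an induced embedding. -/
def indPartMap (f : G ↪g H) : Gᶜ.ConnectedComponent → Hᶜ.ConnectedComponent :=
  ConnectedComponent.map (Embedding.complEquiv f).toHom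

lemma adj_of_not_reachable_compl {u v : V} (h : ¬ Gᶜ.Reachable u v) : G.Adj u v := by
  simpa using (Gᶜ.reachable_or_compl_adj u v).resolve_left h

lemma compl_induce (G : SimpleGraph V) (s : Set V) : (G.induce s)ᶜ = Gᶜ.induce s := by
  ext u v
  simp [Subtype.ext_iff]

end IndParts

section Maximal

variable {P : GProp} {H H' : FGraph}

lemma exists_pMaximal_isSub {G : FGraph} (hG : P G) : ∃ H, PMaximal P H ∧ G.IsSub H := by
  have hfin : {G' : SimpleGraph G.V | P ⟨G.V, G'⟩}.Finite := Set.toFinite _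
  obtain ⟨G', hle, hmax⟩ := hfin.exists_le_maximal (a := G.graph) hG
  refine ⟨⟨G.V, G'⟩, ⟨hmax.prop, fun a b hab hnadj hadd => hnadj ?_⟩,
    Hom.ofLE hle, Function.injective_id⟩
  have hsup : G' ⊔ fromEdgeSet {s(a, b)} ≤ G' := hmax.le_of_ge hadd le_sup_left
  exact hsup (by simp [hab])

lemma PMaximal.map_adj_iff (hh : Hereditary P) (hH : PMaximal P H) (hH' : P H')
    (f : H.graph →g H'.graph) (hf : Function.Injective f) {u v : H.V} :
    H'.graph.Adj (f u) (f v) ↔ H.graph.Adj u v := by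
  refine ⟨fun h => ?_, f.map_adj⟩
  by_contra hnadj
  have huv : u ≠ v := fun huv => h.ne (congrArg f huv)
  have hadj : ∀ x y, (H.graph ⊔ fromEdgeSet {s(u, v)}).Adj x y → H'.graph.Adj (f x) (f y) := by
    rintro x y (hxy | hxy)
    · exact f.map_adj hxy
    · obtain ⟨⟨rfl, rfl⟩ | ⟨rfl, rfl⟩, -⟩ : (x = u ∧ y = v ∨ x = v ∧ y = u) ∧ x ≠ y := by
        simpa using hxy
      exacts [h, h.symm]
  exact hH.2 u v huv hnadj (hh _ _ hH' ⟨⟨f, hadj _ _⟩, hf⟩ ⟨u⟩)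

/-- A copy of a maximal graph inside a member of the property is induced. -/
def PMaximal.toEmbedding (hh : Hereditary P) (hH : PMaximal P H) (hH' : P H')
    (f : H.graph →g H'.graph) (hf : Function.Injective f) : H.graph ↪g H'.graph :=
  ⟨⟨f, hf⟩, hH.map_adj_iff hh hH' f hf⟩

lemma PMaxStar.of_isSub (hH : PMaxStar P H) (hH' : PMaximal P H') (h : H.IsSub H') :
    PMaxStar P H' :=
  ⟨hH', hH.2.trans (Fintype.card_le_of_injective _ h.choose_spec)⟩

lemma PMaxStar.exists_not_adj (hh : Hereditary P)
    (hproper : ¬ ∀ G : FGraph, Nonempty G.V → P G) (hH : PMaxStar P H) (hH' : P H')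
    (f : H.graph →g H'.graph) (hf : Function.Injective f) (x : H'.V) :
    ∃ v, ¬ H'.graph.Adj x (f v) := by
  by_contra! hx
  by_cases htop : H.graph = ⊤
  · have hclique : H'.graph.IsNClique (Fintype.card H.V) (Finset.univ.map ⟨f, hf⟩) := by
      refine ⟨?_, by simp⟩
      intro u hu v hv huv
      obtain ⟨a, -, rfl⟩ := Finset.mem_map.1 hu
      obtain ⟨b, -, rfl⟩ := Finset.mem_map.1 hv
      exact f.map_adj (eq_top_iff_forall_ne_adj.1 htop a b (ne_of_apply_ne f huv))
    have hle := isNClique_card_le_cNum hh hproper hH' (hclique.insert (a := x) (by simpa using hx))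
    exact absurd (hle.trans hH.2) (Nat.not_succ_le_self _)
  · obtain ⟨a, b, hab, hnadj⟩ := ne_top_iff_exists_not_adj.1 htop
    exact hH.1.2 a b hab hnadj (hh _ _ hH' (addEdge_isSub_of_forall_adj f hf hx a b) ⟨a⟩)

lemma PMaxStar.surjective_indPartMap (hh : Hereditary P)
    (hproper : ¬ ∀ G : FGraph, Nonempty G.V → P G) (hH : PMaxStar P H) (hH' : P H')
    (f : H.graph ↪g H'.graph) : Function.Surjective (indPartMap f) := by
  refine ConnectedComponent.ind fun x => ?_
  obtain ⟨v, hv⟩ := hH.exists_not_adj hh hproper hH' f.toHom f.injective x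
  refine ⟨H.graphᶜ.connectedComponentMk v, ConnectedComponent.sound ?_⟩
  exact not_imp_comm.1 adj_of_not_reachable_compl fun h => hv h.symm

lemma dcP_le (hH : PMaxStar P H) : dcP P ≤ dc H := Nat.sInf_le ⟨H, hH, rfl⟩

lemma PMaxStar.bijective_indPartMap (hh : Hereditary P)
    (hproper : ¬ ∀ G : FGraph, Nonempty G.V → P G) (hH : PMaxStar P H) (hd : dc H = dcP P)
    (hH' : PMaxStar P H') (f : H.graph ↪g H'.graph) : Function.Bijective (indPartMap f) := by
  have hsurj := hH.surjective_indPartMap hh hproper hH'.1.1 f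
  have hle : dc H ≤ dc H' := hd ▸ dcP_le hH'
  exact (Fintype.bijective_iff_surjective_and_card _).2
    ⟨hsurj, hle.antisymm (Fintype.card_le_of_surjective _ hsurj)⟩

lemma exists_pMaxStar_dc_eq (hP : IsGProp P) (hh : Hereditary P)
    (hproper : ¬ ∀ G : FGraph, Nonempty G.V → P G) : ∃ G, PMaxStar P G ∧ dc G = dcP P := by
  have hcomplete : PMaxStar P (complete (cNum P)) :=
    ⟨⟨complete_cNum_mem hP hh hproper, fun a b hab hnadj => absurd hab hnadj⟩, by simp⟩
  exact Nat.sInf_mem (s := {n | ∃ G, PMaxStar P G ∧ dc G = n}) ⟨_, _, hcomplete, rfl⟩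

lemma dcP_eq_one (hP : IsGProp P) (hH : PMaxStar P H) (hd : dc H = 1) : dcP P = 1 := by
  refine le_antisymm (hd ▸ dcP_le hH) ?_
  obtain ⟨G, hG, hGd⟩ : ∃ G, PMaxStar P G ∧ dc G = dcP P :=
    Nat.sInf_mem (s := {n | ∃ G, PMaxStar P G ∧ dc G = n}) ⟨_, _, hH, rfl⟩
  obtain ⟨x⟩ := hP.vertexNonempty G hG.1.1
  rw [← hGd]
  exact Fintype.card_pos_iff.2 ⟨G.graphᶜ.connectedComponentMk x⟩

end Maximal

/-- A finite graph whose ind-parts are labelled bijectively by `ι`. Ind-parts are encoded as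
connected components of the complement. -/
structure LabelledGraph (ι : Type*) extends FGraph where
  parts : graphᶜ.ConnectedComponent ≃ ι

namespace LabelledGraph

variable {ι : Type*} {g g' : LabelledGraph ι}

/-- The label of the ind-part containing the vertex `v`. -/
def label (g : LabelledGraph ι) (v : g.V) : ι := g.parts (g.graphᶜ.connectedComponentMk v)

lemma label_eq_label_iff {u v : g.V} : g.label u = g.label v ↔ g.graphᶜ.Reachable u v :=
  g.parts.injective.eq_iff.trans ConnectedComponent.eq

lemma adj_of_label_ne {u v : g.V} (h : g.label u ≠ g.label v) : g.graph.Adj u v :=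
  adj_of_not_reachable_compl (mt label_eq_label_iff.2 h)

lemma label_surjective (g : LabelledGraph ι) : Function.Surjective g.label :=
  g.parts.surjective.comp Quot.mk_surjective

lemma dc_eq_card [Fintype ι] (g : LabelledGraph ι) : dc g.toFGraph = Fintype.card ι :=
  Fintype.card_congr g.parts

/-- The ind-part labelled `i`, as a graph. -/
noncomputable def part (g : LabelledGraph ι) (i : ι) : FGraph :=
  g.toFGraph.induce (g.label ⁻¹' {i})

lemma nonempty_part (g : LabelledGraph ι) (i : ι) : Nonempty (g.part i).V :=
  (g.label_surjective i).elim fun v hv => ⟨⟨v, hv⟩⟩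

lemma part_isSub (g : LabelledGraph ι) (i : ι) : (g.part i).IsSub g.toFGraph :=
  ⟨(Embedding.induce _).toHom, Subtype.val_injective⟩

lemma dc_part (g : LabelledGraph ι) (i : ι) : dc (g.part i) = 1 := by
  have hsupp : g.label ⁻¹' {i} = (g.parts.symm i).supp := by
    ext v
    exact (Equiv.eq_symm_apply _).symm
  have hconn : (g.graph.induce (g.label ⁻¹' {i}))ᶜ.Connected := by
    rw [compl_induce, hsupp]
    exact (g.parts.symm i).connected_toSimpleGraph
  obtain ⟨v⟩ := hconn.nonempty
  exact Fintype.card_eq_one_iff.2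
    ⟨connectedComponentMk _ v, fun _ => hconn.preconnected.subsingleton_connectedComponent.elim _ _⟩

/-- `g ≤ g'` if `g` is an induced subgraph of `g'` in a way that preserves the labels. -/
instance : Preorder (LabelledGraph ι) where
  le g g' := ∃ f : g.graph ↪g g'.graph, ∀ v, g'.label (f v) = g.label v
  le_refl _ := ⟨Embedding.refl, fun _ => rfl⟩
  le_trans := fun _ _ _ ⟨f, hf⟩ ⟨f', hf'⟩ =>
    ⟨f'.comp f, fun v => (hf' (f v)).trans (hf v)⟩

lemma part_isSub_part (h : g ≤ g') (i : ι) : (g.part i).IsSub (g'.part i) := by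
  obtain ⟨f, hf⟩ := h
  exact induce_isSub_induce f.toHom f.injective fun v hv => (hf v).trans hv

/-- The labelling of `H` obtained from that of `g` along an embedding which matches the ind-parts
of `g` and `H` bijectively. -/
noncomputable def transport (g : LabelledGraph ι) {H : FGraph} (f : g.graph ↪g H.graph)
    (hf : Function.Bijective (indPartMap f)) : LabelledGraph ι :=
  ⟨H, (Equiv.ofBijective _ hf).symm.trans g.parts⟩

lemma transport_label {H : FGraph} {f f' : g.graph ↪g H.graph}
    (hf : Function.Bijective (indPartMap f)) (h : indPartMap f' = indPartMap f) (v : g.V) :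
    (g.transport f hf).label (f' v) = g.label v := by
  have hpart := congrFun h (g.graphᶜ.connectedComponentMk v)
  exact congrArg g.parts ((Equiv.ofBijective _ hf).symm_apply_eq.2 hpart)

lemma le_transport {H : FGraph} {f : g.graph ↪g H.graph}
    (hf : Function.Bijective (indPartMap f)) : g ≤ g.transport f hf :=
  ⟨f, transport_label hf rfl⟩

/-- Distinct ind-parts are completely joined, so the copies of the pieces of `G` fit together. -/
lemma isSub_of_forall_isSub_part {G : FGraph} (c : G.V → ι)
    (h : ∀ i, (c ⁻¹' {i}).Nonempty → (G.induce (c ⁻¹' {i})).IsSub (g.part i)) :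
    G.IsSub g.toFGraph := by
  choose φ hφ using h
  let f : G.V → g.V := fun v => (φ (c v) ⟨v, rfl⟩ ⟨v, rfl⟩).1
  have hval : ∀ i u (hu : c u = i), f u = (φ i ⟨u, hu⟩ ⟨u, hu⟩).1 := by
    rintro _ u rfl
    rfl
  have hlabel : ∀ v, g.label (f v) = c v := fun v => (φ (c v) ⟨v, rfl⟩ ⟨v, rfl⟩).2
  refine ⟨⟨f, fun {u v} huv => ?_⟩, fun u v huv => ?_⟩
  · by_cases hc : c u = c v
    · rw [hval _ u hc, hval _ v rfl]
      exact (φ (c v) ⟨v, rfl⟩).map_adj (v := ⟨u, hc⟩) (w := ⟨v, rfl⟩) huv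
    · exact adj_of_label_ne (by rwa [hlabel, hlabel])
  · have hc : c u = c v := by rw [← hlabel u, ← hlabel v]; exact congrArg g.label huv
    have hφuv : φ (c v) ⟨v, rfl⟩ ⟨u, hc⟩ = φ (c v) ⟨v, rfl⟩ ⟨v, rfl⟩ :=
      Subtype.ext ((hval _ u hc).symm.trans huv)
    exact congrArg Subtype.val (hφ (c v) ⟨v, rfl⟩ hφuv)

lemma directed_part {κ : Type*} [Preorder κ] [IsDirectedOrder κ] {S : κ → LabelledGraph ι}
    (hS : Monotone S) (i : ι) : Directed IsSub fun n => (S n).part i :=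
  fun m n => (exists_ge_ge m n).imp fun _ h =>
    ⟨part_isSub_part (hS h.1) i, part_isSub_part (hS h.2) i⟩

lemma generated_eq_iProd [Finite ι] {κ : Type*} [Preorder κ] [IsDirectedOrder κ] [Nonempty κ]
    {S : κ → LabelledGraph ι} (hS : Monotone S) :
    GProp.generated (fun n => (S n).toFGraph) =
      GProp.iProd fun i => GProp.generated fun n => (S n).part i := by
  funext G
  refine propext (and_congr_right fun _ => ⟨?_, ?_⟩)
  · rintro ⟨n, f, hf⟩
    refine ⟨fun v => (S n).label (f v), fun i hi => ⟨hi.to_subtype, n, ?_⟩⟩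
    exact induce_isSub_induce f hf fun v hv => hv
  · rintro ⟨c, hc⟩
    have hsome : ∀ i, ∃ n, (c ⁻¹' {i}).Nonempty → (G.induce (c ⁻¹' {i})).IsSub ((S n).part i) := by
      intro i
      by_cases hi : (c ⁻¹' {i}).Nonempty
      · exact (hc i hi).2.imp fun _ h _ => h
      · exact ⟨Classical.arbitrary κ, fun h => absurd h hi⟩
    choose n hn using hsome
    obtain ⟨N, hN⟩ := Finite.exists_le n
    exact ⟨N, isSub_of_forall_isSub_part c fun i hi =>
      (hn i hi).trans (part_isSub_part (hS (hN i)) i)⟩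

lemma pMaximal_part {Ps : ι → GProp} (hg : PMaximal (GProp.iProd Ps) g.toFGraph)
    (hPs : ∀ i, Ps i (g.part i)) (i : ι) : PMaximal (Ps i) (g.part i) := by
  refine ⟨hPs i, ?_⟩
  rintro ⟨a, ha⟩ ⟨b, hb⟩ hab hnadj hadd
  refine hg.2 a b (fun h => hab (Subtype.ext h)) hnadj ⟨hg.1.1, g.label, fun j _ => ?_⟩
  obtain rfl | hj := eq_or_ne j i
  · exact (congrArg (Ps j) (induce_addEdge_of_mem g.toFGraph ha hb)).mpr hadd
  · have ha' : a ∉ g.label ⁻¹' {j} := fun h => hj (h.symm.trans ha)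
    exact (congrArg (Ps j) (induce_addEdge_of_notMem g.toFGraph ha' b)).mpr (hPs j)

lemma dcP_generated_part [Finite ι] {κ : Type*} [Preorder κ] [IsDirectedOrder κ] [Nonempty κ]
    {S : κ → LabelledGraph ι} (hS : Monotone S)
    (hmax : ∀ n, PMaximal (GProp.generated fun n => (S n).toFGraph) (S n).toFGraph)
    (hproper : ¬ ∀ G : FGraph, Nonempty G.V → GProp.generated (fun n => (S n).toFGraph) G) (i : ι) :
    dcP (GProp.generated fun n => (S n).part i) = 1 := by
  have hne : ∃ n, Nonempty ((S n).part i).V := ⟨Classical.arbitrary κ, nonempty_part _ i⟩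
  have hproper_part :
      ¬ ∀ G : FGraph, Nonempty G.V → GProp.generated (fun n => (S n).part i) G := by
    refine fun h => hproper fun G hG => ⟨hG, ?_⟩
    exact (h G hG).2.imp fun n hn => hn.trans ((S n).part_isSub i)
  obtain ⟨n, hn⟩ := exists_cNum_generated_le_card hne hproper_part
  have hmax_part := pMaximal_part (generated_eq_iProd hS ▸ hmax n)
    (fun j => ⟨(S n).nonempty_part j, n, IsSub.refl _⟩) i
  exact dcP_eq_one (GProp.isGProp_generated hne) ⟨hmax_part, hn⟩ ((S n).dc_part i)

lemma disjUnion_part_isSub_part_transport {H : FGraph} {f f' : g.graph ↪g H.graph}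
    (hf : Function.Bijective (indPartMap f)) (h : indPartMap f' = indPartMap f)
    (hdisj : ∀ u v, f u ≠ f' v) (i : ι) :
    ((g.part i).disjUnion (g.part i)).IsSub ((g.transport f hf).part i) := by
  have hmaps : Set.MapsTo f (g.label ⁻¹' {i}) ((g.transport f hf).label ⁻¹' {i}) :=
    fun v hv => (transport_label hf rfl v).trans hv
  have hmaps' : Set.MapsTo f' (g.label ⁻¹' {i}) ((g.transport f hf).label ⁻¹' {i}) :=
    fun v hv => (transport_label hf h v).trans hv
  exact disjUnion_isSub (K := (g.transport f hf).part i)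
    (induceHom f.toHom hmaps) (induceHom f'.toHom hmaps')
    (induceHom_injective _ hmaps f.injective.injOn)
    (induceHom_injective _ hmaps' f'.injective.injOn)
    fun u v huv => hdisj u.1 v.1 (congrArg Subtype.val huv)

end LabelledGraph

section Chain

open LabelledGraph

variable {P : GProp} {ι : Type*} {g : LabelledGraph ι}

lemma AdditiveProp.boxProd_bot_mem (hadd : AdditiveProp P) (hh : Hereditary P) {H : FGraph}
    (hH : P H) (hne : Nonempty H.V) (k : ℕ) :
    P ⟨Fin (k + 1) × H.V, (⊥ : SimpleGraph (Fin (k + 1))) □ H.graph⟩ := by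
  induction k with
  | zero =>
    refine hh _ _ hH ⟨⟨Prod.snd, fun huv => ?_⟩, fun u v huv => ?_⟩ inferInstance
    · exact (boxProd_adj.1 huv).elim (fun h => h.1.elim) fun h => h.1
    · exact Prod.ext (Subsingleton.elim (α := Fin 1) _ _) huv
  | succ k ih =>
    let f : Fin (k + 2) × H.V → (Fin (k + 1) × H.V) ⊕ H.V := fun p =>
      Fin.cases (Sum.inr p.2) (fun j => Sum.inl (j, p.2)) p.1
    have hf : Function.Injective f := by
      rintro ⟨a, u⟩ ⟨b, v⟩
      cases a using Fin.cases <;> cases b using Fin.cases <;> simp [f]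
    refine hh _ _ (hadd _ _ ih hH) ⟨⟨f, ?_⟩, hf⟩ inferInstance
    rintro ⟨a, u⟩ ⟨b, v⟩ huv
    obtain ⟨hadj, rfl⟩ : H.graph.Adj u v ∧ a = b := by simpa using huv
    cases a using Fin.cases <;> simpa [f, FGraph.disjUnion] using hadj

lemma PMaxStar.exists_ge_isSub (hcomp : HerCompositive P)
    (hproper : ¬ ∀ G : FGraph, Nonempty G.V → P G) (hg : PMaxStar P g.toFGraph)
    (hd : dc g.toFGraph = dcP P) {X : FGraph} (hX : P X) :
    ∃ g', g ≤ g' ∧ PMaxStar P g'.toFGraph ∧ X.IsSub g'.toFGraph := by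
  obtain ⟨K, hK, hgK, hXK⟩ := hcomp.2 _ _ hg.1.1 hX
  obtain ⟨H, hH, hKH⟩ := exists_pMaximal_isSub hK
  have hH' := hg.of_isSub hH (hgK.trans hKH)
  obtain ⟨φ, hφ⟩ := hgK.trans hKH
  have hbij := hg.bijective_indPartMap hcomp.1 hproper hd hH' (hg.1.toEmbedding hcomp.1 hH.1 φ hφ)
  exact ⟨g.transport _ hbij, le_transport hbij, hH', hXK.trans hKH⟩

lemma PMaxStar.exists_ge_disjUnion_part_isSub [Finite ι] (hP : IsGProp P) (hcomp : HerCompositive P)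
    (hproper : ¬ ∀ G : FGraph, Nonempty G.V → P G) (hadd : AdditiveProp P)
    (hg : PMaxStar P g.toFGraph) (hd : dc g.toFGraph = dcP P) :
    ∃ g', g ≤ g' ∧ PMaxStar P g'.toFGraph ∧
      ∀ i, ((g.part i).disjUnion (g.part i)).IsSub (g'.part i) := by
  have := Fintype.ofFinite ι
  let k := Fintype.card (g.graphᶜ.ConnectedComponent → ι)
  have hcopies := hadd.boxProd_bot_mem hcomp.1 hg.1.1 (hP.vertexNonempty _ hg.1.1) k
  obtain ⟨h, -, hmax, F, hF⟩ := hg.exists_ge_isSub hcomp hproper hd hcopies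
  let E : Fin (k + 1) → (g.graph ↪g h.graph) := fun a =>
    hg.1.toEmbedding hcomp.1 hmax.1.1 (F.comp (boxProdRight ⊥ g.graph a).toHom)
      (hF.comp (boxProdRight ⊥ g.graph a).injective)
  obtain ⟨a, b, hab, hEab⟩ := Fintype.exists_ne_map_eq_of_card_lt
    (fun a => h.parts ∘ indPartMap (E a)) (by simp [k])
  have hpart : indPartMap (E b) = indPartMap (E a) := h.parts.injective.comp_left hEab.symm
  have hbij := hg.bijective_indPartMap hcomp.1 hproper hd hmax (E a)
  refine ⟨g.transport (E a) hbij, le_transport hbij, hmax,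
    disjUnion_part_isSub_part_transport hbij hpart fun u v huv => ?_⟩
  exact hab (congrArg Prod.fst (hF huv))

lemma PMaxStar.exists_ge_isSub_and_disjUnion_part_isSub [Finite ι] (hP : IsGProp P)
    (hcomp : HerCompositive P) (hproper : ¬ ∀ G : FGraph, Nonempty G.V → P G)
    (hg : PMaxStar P g.toFGraph) (hd : dc g.toFGraph = dcP P) {X : FGraph} (hX : P X) :
    ∃ g', g ≤ g' ∧ PMaxStar P g'.toFGraph ∧ X.IsSub g'.toFGraph ∧
      (AdditiveProp P → ∀ i, ((g.part i).disjUnion (g.part i)).IsSub (g'.part i)) := by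
  obtain ⟨h, hgh, hmax, hdouble⟩ : ∃ h, g ≤ h ∧ PMaxStar P h.toFGraph ∧
      (AdditiveProp P → ∀ i, ((g.part i).disjUnion (g.part i)).IsSub (h.part i)) := by
    by_cases hadd : AdditiveProp P
    · obtain ⟨h, hgh, hmax, hdouble⟩ := hg.exists_ge_disjUnion_part_isSub hP hcomp hproper hadd hd
      exact ⟨h, hgh, hmax, fun _ => hdouble⟩
    · exact ⟨g, le_rfl, hg, fun h => absurd h hadd⟩
  have hhd : dc h.toFGraph = dcP P := by
    rw [← hd]
    exact Fintype.card_congr (h.parts.trans g.parts.symm)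
  obtain ⟨g', hhg', hg', hX'⟩ := hmax.exists_ge_isSub hcomp hproper hhd hX
  exact ⟨g', hgh.trans hhg', hg', hX',
    fun hadd i => (hdouble hadd i).trans (part_isSub_part hhg' i)⟩

lemma IsGProp.exists_seq_iso (hP : IsGProp P) :
    ∃ X : ℕ → FGraph, (∀ n, P (X n)) ∧ ∀ G, P G → ∃ n, G.Iso (X n) := by
  let T := {x : Σ n, SimpleGraph (Fin n) // P ⟨Fin x.1, x.2⟩}
  have hT : ∀ G, P G → ∃ x : T, G.Iso ⟨Fin x.1.1, x.1.2⟩ := fun G hG =>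
    ⟨⟨⟨_, G.graph.overFin rfl⟩, hP.isoClosed _ _ ⟨G.graph.overFinIso rfl⟩ hG⟩,
      ⟨G.graph.overFinIso rfl⟩⟩
  have : Nonempty T := hP.nonempty.elim fun G hG => (hT G hG).nonempty
  obtain ⟨e, he⟩ := exists_surjective_nat T
  refine ⟨fun n => ⟨Fin (e n).1.1, (e n).1.2⟩, fun n => (e n).2, fun G hG => ?_⟩
  obtain ⟨x, hx⟩ := hT G hG
  obtain ⟨n, rfl⟩ := he x
  exact ⟨n, hx⟩

lemma exists_monotone_seq_pMaxStar (hP : IsGProp P) (hcomp : HerCompositive P)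
    (hproper : ¬ ∀ G : FGraph, Nonempty G.V → P G) :
    ∃ S : ℕ → LabelledGraph (Fin (dcP P)), Monotone S ∧ (∀ n, PMaxStar P (S n).toFGraph) ∧
      (∀ G, P G → ∃ n, G.IsSub (S n).toFGraph) ∧
      (AdditiveProp P → ∀ n i,
        (((S n).part i).disjUnion ((S n).part i)).IsSub ((S (n + 1)).part i)) := by
  obtain ⟨X, hX, hXcof⟩ := hP.exists_seq_iso
  obtain ⟨G₀, hG₀, hd⟩ := exists_pMaxStar_dc_eq hP hcomp.1 hproper
  let g₀ : LabelledGraph (Fin (dcP P)) := ⟨G₀, Fintype.equivFinOfCardEq hd⟩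
  choose succ hle hmax hsub hdouble using
    fun (n : ℕ) (g : {g : LabelledGraph (Fin (dcP P)) // PMaxStar P g.toFGraph}) =>
      g.2.exists_ge_isSub_and_disjUnion_part_isSub hP hcomp hproper
        (g.1.dc_eq_card.trans (Fintype.card_fin _)) (hX n)
  let S : ℕ → {g : LabelledGraph (Fin (dcP P)) // PMaxStar P g.toFGraph} :=
    fun n => n.rec ⟨g₀, hG₀⟩ fun n g => ⟨succ n g, hmax n g⟩
  refine ⟨fun n => (S n).1, monotone_nat_of_le_succ fun n => hle n (S n), fun n => (S n).2,
    fun G hG => ?_, fun hadd n => hdouble n (S n) hadd⟩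
  obtain ⟨n, hn⟩ := hXcof G hG
  exact ⟨n + 1, hn.isSub.trans (hsub n (S n))⟩

end Chain

/-- a hereditary compositive graph property `P` not containing
all graphs is the product of `d = dc(P)` indecomposable hereditary compositive
graph properties; moreover, if `P` is additive the factors can be chosen to be
additive as well. -/
theorem statement_17 (P : GProp) (hP : IsGProp P) (hcomp : HerCompositive P)
    (hnotall : ¬ ∀ G : FGraph, Nonempty G.V → P G) :
    (∃ Ps : Fin (dcP P) → GProp,
      (∀ i, IsGProp (Ps i) ∧ HerCompositive (Ps i) ∧ dcP (Ps i) = 1) ∧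
      P = GProp.iProd Ps) ∧
    (AdditiveProp P →
      ∃ Ps : Fin (dcP P) → GProp,
        (∀ i, IsGProp (Ps i) ∧ HerCompositive (Ps i) ∧ AdditiveProp (Ps i) ∧
          dcP (Ps i) = 1) ∧
        P = GProp.iProd Ps) := by
  obtain ⟨S, hS, hmax, hcof, hdouble⟩ := exists_monotone_seq_pMaxStar hP hcomp hnotall
  have hgen : P = GProp.generated fun n => (S n).toFGraph :=
    GProp.eq_generated hP hcomp.1 (fun n => (hmax n).1.1) hcof
  let Ps : Fin (dcP P) → GProp := fun i => GProp.generated fun n => (S n).part i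
  have hprod : P = GProp.iProd Ps := hgen.trans (LabelledGraph.generated_eq_iProd hS)
  have hdir (i) : Directed IsSub fun n => (S n).part i := LabelledGraph.directed_part hS i
  have hPs (i) : IsGProp (Ps i) := GProp.isGProp_generated ⟨0, (S 0).nonempty_part i⟩
  have hPs_comp (i) : HerCompositive (Ps i) := GProp.herCompositive_generated (hdir i)
  have hPs_dc (i) : dcP (Ps i) = 1 :=
    LabelledGraph.dcP_generated_part hS (fun n => hgen ▸ (hmax n).1) (hgen ▸ hnotall) i
  have hPs_add (hadd : AdditiveProp P) (i) : AdditiveProp (Ps i) :=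
    GProp.additiveProp_generated (hdir i) fun n => ⟨n + 1, hdouble hadd n i⟩
  exact ⟨⟨Ps, fun i => ⟨hPs i, hPs_comp i, hPs_dc i⟩, hprod⟩,
    fun hadd => ⟨Ps, fun i => ⟨hPs i, hPs_comp i, hPs_add hadd i, hPs_dc i⟩, hprod⟩⟩
end
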